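/- Let V be a vertex operator algebra such that L(0) acts semisimply on every weak V-module (class 𝒜), and let W be an ordinary V-module. Then W/C_n(W) is finite-dimensional for every n ≥ 2; moreover W/C₁(W) is finite-dimensional provided the real parts of the weights of W are bounded from below. -/

import Mathlib

noncomputable section

/-- The generalized binomial coefficient `C(m, i)` for `m ∈ ℤ`, `i ∈ ℕ`,
as a complex number: `m(m-1)⋯(m-i+1)/i!`. -/
def cchoose (m : ℤ) (i : ℕ) : ℂ :=
  (∏ j ∈ Finset.range i, ((m : ℂ) - (j : ℂ))) / (Nat.factorial i : ℂ)

/-- A vertex operator algebra `V = ⊕ₙ V₍ₙ₎` over `ℂ`.  The vertex operator map is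
recorded through its modes `op u n v = uₙ v` (so `Y(u,x)v = Σₙ uₙv x^{-n-1}`), with
vacuum `one`, conformal vector `omega` (with `L(k) = ω_{k+1}`), central charge `cc`,
weight grading `wtSpace` with projections `proj`.  The Jacobi identity is recorded in
the equivalent form of the Borcherds identity on modes. -/
structure VOA where
  carrier : Type
  [grp : AddCommGroup carrier]
  [mdl : Module ℂ carrier]
  op : carrier → ℤ → carrier → carrier
  one : carrier
  omega : carrier
  wtSpace : ℤ → Submodule ℂ carrier
  proj : ℤ → carrier → carrier
  cc : ℂ
  op_linear_left : ∀ (n : ℤ) (w : carrier), IsLinearMap ℂ fun u => op u n w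
  op_linear_right : ∀ (u : carrier) (n : ℤ), IsLinearMap ℂ (op u n)
  trunc : ∀ u v : carrier, ∃ N : ℤ, ∀ n : ℤ, N ≤ n → op u n v = 0
  one_op : ∀ (n : ℤ) (v : carrier), op one n v = if n = -1 then v else 0
  create_nonneg : ∀ (v : carrier) (n : ℤ), 0 ≤ n → op v n one = 0
  create : ∀ v : carrier, op v (-1) one = v
  borcherds : ∀ (u v w : carrier) (l m n : ℤ),
    (∑ᶠ i : ℕ, cchoose m i • op (op u (l + (i : ℤ)) v) (m + n - (i : ℤ)) w)
      = ∑ᶠ i : ℕ, ((-1 : ℂ) ^ i * cchoose l i) •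
          (op u (l + m - (i : ℤ)) (op v (n + (i : ℤ)) w)
            - ((-1 : ℂ) ^ l) • op v (l + n - (i : ℤ)) (op u (m + (i : ℤ)) w))
  proj_linear : ∀ n : ℤ, IsLinearMap ℂ (proj n)
  proj_mem : ∀ (n : ℤ) (v : carrier), proj n v ∈ wtSpace n
  proj_eq : ∀ n : ℤ, ∀ v ∈ wtSpace n, proj n v = v
  proj_ne : ∀ m n : ℤ, m ≠ n → ∀ v ∈ wtSpace m, proj n v = 0
  proj_finite : ∀ v : carrier, (Function.support fun n => proj n v).Finite
  proj_sum : ∀ v : carrier, (∑ᶠ n : ℤ, proj n v) = v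
  fd : ∀ n : ℤ, FiniteDimensional ℂ (wtSpace n)
  lower_trunc : ∃ N : ℤ, ∀ n : ℤ, n < N → wtSpace n = ⊥
  one_wt : one ∈ wtSpace 0
  omega_wt : omega ∈ wtSpace 2
  op_wt : ∀ k m n : ℤ, ∀ u ∈ wtSpace k, ∀ v ∈ wtSpace m, op u n v ∈ wtSpace (k + m - n - 1)
  L_zero : ∀ n : ℤ, ∀ v ∈ wtSpace n, op omega 1 v = (n : ℂ) • v
  L_neg_one : ∀ (u : carrier) (n : ℤ) (w : carrier),
    op (op omega 0 u) n w = (-(n : ℂ)) • op u (n - 1) w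
  virasoro : ∀ (m n : ℤ) (v : carrier),
    op omega (m + 1) (op omega (n + 1) v) - op omega (n + 1) (op omega (m + 1) v)
      = ((m : ℂ) - (n : ℂ)) • op omega (m + n + 1) v
        + (if m + n = 0 then (((m : ℂ) ^ 3 - (m : ℂ)) / 12) * cc else 0) • v

attribute [instance] VOA.grp VOA.mdl

namespace VOA

variable (V : VOA)

/-- The Virasoro operator `L(k) = ω_{k+1}`. -/
def L (k : ℤ) (v : V.carrier) : V.carrier := V.op V.omega (k + 1) v

/-- The positive-weight part `V₊ = ⊕_{n ≥ 1} V₍ₙ₎`. -/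
def pos : Submodule ℂ V.carrier := ⨆ (n : ℤ) (_ : 1 ≤ n), V.wtSpace n

/-- Zhu's subspace `C₂(V) = span{u₋₂v : u, v ∈ V}`. -/
def C2 : Submodule ℂ V.carrier :=
  Submodule.span ℂ {x : V.carrier | ∃ u v : V.carrier, x = V.op u (-2) v}

/-- The subspace `C₁(V) = span(v₋₁V₊ (v ∈ V₊) together with L(-1)V)`. -/
def C1 : Submodule ℂ V.carrier :=
  Submodule.span ℂ
    ({x : V.carrier | ∃ u ∈ V.pos, ∃ v ∈ V.pos, x = V.op u (-1) v}
      ∪ {x : V.carrier | ∃ v : V.carrier, x = V.op V.omega 0 v})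

/-- Iterated application of modes: `iterApply [(u¹,n₁),…,(uʳ,n_r)] w = u¹_{n₁} ⋯ uʳ_{n_r} w`. -/
def iterApply : List (V.carrier × ℤ) → V.carrier → V.carrier
  | [], w => w
  | p :: l, w => V.op p.1 p.2 (iterApply l w)

/-- `U ⊆ V` generates `V` as a vertex operator algebra:  `V` is linearly spanned by
the elements `u¹_{n₁} ⋯ uʳ_{n_r} 1` with `uⁱ ∈ U`, `n_i ∈ ℤ`. -/
def generates (U : Set V.carrier) : Prop :=
  Submodule.span ℂ {x : V.carrier | ∃ l : List (V.carrier × ℤ),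
    (∀ p ∈ l, p.1 ∈ U) ∧ x = V.iterApply l V.one} = ⊤

/-- `V` is finitely generated as a vertex operator algebra. -/
def FinitelyGenerated : Prop := ∃ S : Finset V.carrier, V.generates ↑S

end VOA

/-- A weak `V`-module: all axioms of a module (truncation, vacuum, Jacobi identity in
Borcherds form) except those involving gradings. -/
structure WeakModule (V : VOA) where
  carrier : Type
  [grp : AddCommGroup carrier]
  [mdl : Module ℂ carrier]
  op : V.carrier → ℤ → carrier → carrier
  op_linear_left : ∀ (n : ℤ) (w : carrier), IsLinearMap ℂ fun u => op u n w
  op_linear_right : ∀ (u : V.carrier) (n : ℤ), IsLinearMap ℂ (op u n)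
  trunc : ∀ (u : V.carrier) (w : carrier), ∃ N : ℤ, ∀ n : ℤ, N ≤ n → op u n w = 0
  one_op : ∀ (n : ℤ) (w : carrier), op V.one n w = if n = -1 then w else 0
  borcherds : ∀ (u v : V.carrier) (w : carrier) (l m n : ℤ),
    (∑ᶠ i : ℕ, cchoose m i • op (V.op u (l + (i : ℤ)) v) (m + n - (i : ℤ)) w)
      = ∑ᶠ i : ℕ, ((-1 : ℂ) ^ i * cchoose l i) •
          (op u (l + m - (i : ℤ)) (op v (n + (i : ℤ)) w)
            - ((-1 : ℂ) ^ l) • op v (l + n - (i : ℤ)) (op u (m + (i : ℤ)) w))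

attribute [instance] WeakModule.grp WeakModule.mdl

namespace WeakModule

variable {V : VOA} (W : WeakModule V)

/-- `L(0)` acting on a weak module, as a linear map. -/
def L0 : W.carrier →ₗ[ℂ] W.carrier := IsLinearMap.mk' _ (W.op_linear_right V.omega 1)

/-- The `L(0)`-eigenspace of eigenvalue `h`. -/
def eig (h : ℂ) : Submodule ℂ W.carrier :=
  LinearMap.ker (W.L0 - h • (LinearMap.id : W.carrier →ₗ[ℂ] W.carrier))

/-- The coefficient `v*ₙ` of the adjoint vertex operator
`⟨Y*(v,x)α, w⟩ = ⟨α, Y(e^{xL(1)}(-x^{-2})^{L(0)}v, x^{-1})w⟩` acting on the full dual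
space: for `v` homogeneous of weight `h`,
`(v*ₙ α)(w) = (-1)^h Σ_{i≥0} (1/i!) α((L(1)^i v)_{2h-n-i-2} w)`, extended to general
`v` via the weight-space projections. -/
def dmode (v : V.carrier) (n : ℤ) (α : W.carrier → ℂ) (w : W.carrier) : ℂ :=
  ∑ᶠ h : ℤ, ∑ᶠ i : ℕ,
    ((-1 : ℂ) ^ h / (Nat.factorial i : ℂ)) *
      α (W.op ((V.L 1)^[i] (V.proj h v)) (2 * h - n - (i : ℤ) - 2) w)

/-- `D(W) ⊆ W*`: the linear functionals `α` on `W` such that for every `v ∈ V`,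
`Y*(v,x)α ∈ W*((x))`, i.e. `v*ₙ α = 0` for `n` sufficiently large. -/
def DW : Set (W.carrier → ℂ) :=
  {α | IsLinearMap ℂ α ∧
    ∀ v : V.carrier, ∃ N : ℤ, ∀ n : ℤ, N ≤ n → ∀ w : W.carrier, W.dmode v n α w = 0}

/-- A subspace stable under all modes of all vertex operators, i.e. a `V`-submodule. -/
def IsStable (S : Submodule ℂ W.carrier) : Prop :=
  ∀ (v : V.carrier) (n : ℤ), ∀ m ∈ S, W.op v n m ∈ S

/-- An irreducible (nonzero, no proper nonzero stable subspaces) `V`-submodule. -/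
def IsIrreducibleSub (S : Submodule ℂ W.carrier) : Prop :=
  S ≠ ⊥ ∧ W.IsStable S ∧
    ∀ T : Submodule ℂ W.carrier, W.IsStable T → T ≤ S → T = ⊥ ∨ T = S

/-- A stable subspace which is an ordinary module: `L(0)` acts semisimply on it with
finite-dimensional eigenspaces, and for each `h` the eigenvalues `h + m` do not occur
for `m` a sufficiently negative integer. -/
def IsOrdinarySub (S : Submodule ℂ W.carrier) : Prop :=
  S ≤ (⨆ h : ℂ, W.eig h ⊓ S) ∧ (∀ h : ℂ, FiniteDimensional ℂ ↥(W.eig h ⊓ S)) ∧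
    ∀ h : ℂ, ∃ N : ℤ, ∀ m : ℤ, m ≤ N → W.eig (h + (m : ℂ)) ⊓ S = ⊥

/-- The weak module `W` is irreducible. -/
def IsIrreducible : Prop :=
  (⊥ : Submodule ℂ W.carrier) ≠ ⊤ ∧
    ∀ S : Submodule ℂ W.carrier, W.IsStable S → S = ⊥ ∨ S = ⊤

/-- `Cₙ(W) = span{v₋ₙw : v ∈ V, w ∈ W}`. -/
def Cn (n : ℤ) : Submodule ℂ W.carrier :=
  Submodule.span ℂ {x : W.carrier | ∃ (v : V.carrier) (w : W.carrier), x = W.op v (-n) w}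

/-- `B(W) = span(u₋₁W (u ∈ V₊) together with v₀W (v homogeneous, wt v ≥ 2))`. -/
def BW : Submodule ℂ W.carrier :=
  Submodule.span ℂ
    ({x : W.carrier | ∃ v ∈ V.pos, ∃ w : W.carrier, x = W.op v (-1) w}
      ∪ {x : W.carrier | ∃ k : ℤ, 2 ≤ k ∧ ∃ v ∈ V.wtSpace k, ∃ w : W.carrier, x = W.op v 0 w})

/-- Zhu's subspace `O(W) = span{Σ_{i≥0} C(wt v, i) v_{i-2} w}` so that `A(W) = W/O(W)`. -/
def OW : Submodule ℂ W.carrier :=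
  Submodule.span ℂ
    {x : W.carrier | ∃ (k : ℤ) (v : V.carrier), v ∈ V.wtSpace k ∧
      ∃ w : W.carrier, x = ∑ᶠ i : ℕ, cchoose k i • W.op v ((i : ℤ) - 2) w}

/-- A subspace `T ⊇ O(W)` of `W` is closed under the Frenkel–Zhu left and right
`A(V)`-actions `v * w = Σᵢ C(wt v, i) v_{i-1} w` and `w * v = Σᵢ C(wt v - 1, i) v_{i-1} w`;
for `T ⊇ O(W)` this expresses that `T/O(W)` is an `A(V)`-sub-bimodule of `A(W)`. -/
def BimoduleClosed (T : Submodule ℂ W.carrier) : Prop :=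
  ∀ k : ℤ, ∀ v ∈ V.wtSpace k, ∀ w ∈ T,
    (∑ᶠ i : ℕ, cchoose k i • W.op v ((i : ℤ) - 1) w) ∈ T ∧
    (∑ᶠ i : ℕ, cchoose (k - 1) i • W.op v ((i : ℤ) - 1) w) ∈ T

/-- Equivalence (isomorphism) of weak modules. -/
def Equiv (M N : WeakModule V) : Prop :=
  ∃ e : M.carrier ≃ₗ[ℂ] N.carrier,
    ∀ (v : V.carrier) (n : ℤ) (w : M.carrier), e (M.op v n w) = N.op v n (e w)

end WeakModule

/-- `V` is of class 𝒜: `L(0)` acts semisimply on every weak `V`-module. -/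
def VOA.classA (V : VOA) : Prop :=
  ∀ M : WeakModule V, (⨆ h : ℂ, M.eig h) = ⊤

/-- `V` is regular: every weak `V`-module is a direct sum of irreducible ordinary
`V`-modules. -/
def VOA.regular (V : VOA) : Prop :=
  ∀ M : WeakModule V, ∃ (ι : Type) (S : ι → Submodule ℂ M.carrier),
    (∀ i, M.IsIrreducibleSub (S i) ∧ M.IsOrdinarySub (S i)) ∧
    (∀ i, Disjoint (S i) (⨆ (j : ι) (_ : j ≠ i), S j)) ∧ (⨆ i, S i) = ⊤

/-- A generalized `V`-module: a weak module with a semisimple `L(0)`-action, graded by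
the `L(0)`-eigenvalues, with weight-space projections `projW`. -/
structure GenModule (V : VOA) extends WeakModule V where
  wt : ℂ → Submodule ℂ carrier
  projW : ℂ → carrier → carrier
  projW_linear : ∀ h : ℂ, IsLinearMap ℂ (projW h)
  projW_mem : ∀ (h : ℂ) (w : carrier), projW h w ∈ wt h
  projW_eq : ∀ h : ℂ, ∀ w ∈ wt h, projW h w = w
  projW_ne : ∀ g h : ℂ, g ≠ h → ∀ w ∈ wt g, projW h w = 0
  projW_finite : ∀ w : carrier, (Function.support fun h => projW h w).Finite
  projW_sum : ∀ w : carrier, (∑ᶠ h : ℂ, projW h w) = w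
  wt_L0 : ∀ h : ℂ, ∀ w ∈ wt h, op V.omega 1 w = h • w
  wt_op : ∀ k : ℤ, ∀ v ∈ V.wtSpace k, ∀ (h : ℂ) (n : ℤ), ∀ w ∈ wt h,
    op v n w ∈ wt (h + (k : ℂ) - (n : ℂ) - 1)

/-- An ordinary `V`-module: a generalized module whose weight spaces are
finite-dimensional and whose weights are truncated from below in each coset `h + ℤ`. -/
structure OrdModule (V : VOA) extends GenModule V where
  wt_fd : ∀ h : ℂ, FiniteDimensional ℂ ↥(wt h)
  wt_lower : ∀ h : ℂ, ∃ N : ℤ, ∀ m : ℤ, m ≤ N → wt (h + (m : ℂ)) = ⊥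

namespace GenModule

variable {V : VOA} (W : GenModule V)

/-- `W₊ = ⊕_{Re h > 0} W₍ₕ₎`. -/
def posW : Submodule ℂ W.carrier := ⨆ (h : ℂ) (_ : 0 < h.re), W.wt h

/-- `C₁(W) = span(v₋₁W₊ (v ∈ V₊) together with L(-1)W)`. -/
def C1W : Submodule ℂ W.carrier :=
  Submodule.span ℂ
    ({x : W.carrier | ∃ v ∈ V.pos, ∃ w ∈ W.posW, x = W.op v (-1) w}
      ∪ {x : W.carrier | ∃ w : W.carrier, x = W.op V.omega 0 w})

/-- The restricted dual `W' = ⊕ₕ W₍ₕ₎* ⊆ W*`: the linear functionals vanishing on all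
but finitely many weight spaces. -/
def restrictedDual : Set (W.carrier → ℂ) :=
  {α | IsLinearMap ℂ α ∧ {h : ℂ | ∃ w ∈ W.wt h, α w ≠ 0}.Finite}

end GenModule

/-- `D(W)⁰`: the sum of the `L(0)`-eigenspaces of the weak module `D(W) ⊆ W*`, where
`L*(0) = ω*₁` acts on `α ∈ W*` by `(L*(0)α)(w) = α(L(0)w)`. -/
def OrdModule.DW0 {V : VOA} (W : OrdModule V) : Set (W.carrier → ℂ) :=
  {α | ∃ (S : Finset ℂ) (f : ℂ → (W.carrier → ℂ)),
    (∀ h ∈ S, f h ∈ W.toWeakModule.DW ∧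
      ∀ w : W.carrier, f h (W.op V.omega 1 w) = h * f h w) ∧
    α = ∑ h ∈ S, f h}

/-- An ℕ-gradable weak `V`-module: a weak module with an ℕ-grading
`W = ⊕_{n∈ℕ} W(n)` with `v_m W(n) ⊆ W(wt v + n - m - 1)` (graded pieces of negative
index are zero). -/
structure NGradedModule (V : VOA) extends WeakModule V where
  gr : ℤ → Submodule ℂ carrier
  gr_neg : ∀ n : ℤ, n < 0 → gr n = ⊥
  gr_sup : (⨆ n : ℤ, gr n) = ⊤
  gr_indep : ∀ n : ℤ, Disjoint (gr n) (⨆ (m : ℤ) (_ : m ≠ n), gr m)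
  gr_op : ∀ k : ℤ, ∀ v ∈ V.wtSpace k, ∀ m n : ℤ, ∀ w ∈ gr n,
    op v m w ∈ gr (k + n - m - 1)

/-- An intertwining operator of type `(W₃; W₁ W₂)` in the sense of
Frenkel–Huang–Lepowsky, recorded through its complex-indexed modes
`I w₁ h w₂ = (w₁)ₕ w₂` (so `Y(w₁,x)w₂ = Σ_{h∈ℂ} (w₁)ₕ w₂ x^{-h-1}`):
linearity, truncation, the `L(-1)`-derivative property, and the Jacobi identity in
component (Borcherds) form. -/
def IsIntertwiner {V : VOA} (W1 W2 W3 : OrdModule V)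
    (I : W1.carrier → ℂ → W2.carrier → W3.carrier) : Prop :=
  (∀ (h : ℂ) (w2 : W2.carrier), IsLinearMap ℂ fun w1 => I w1 h w2) ∧
  (∀ (w1 : W1.carrier) (h : ℂ), IsLinearMap ℂ (I w1 h)) ∧
  (∀ (w1 : W1.carrier) (w2 : W2.carrier) (h : ℂ),
    ∃ N : ℤ, ∀ n : ℤ, N ≤ n → I w1 (h + (n : ℂ)) w2 = 0) ∧
  (∀ (w1 : W1.carrier) (h : ℂ) (w2 : W2.carrier),
    I (W1.op V.omega 0 w1) h w2 = (-h) • I w1 (h - 1) w2) ∧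
  (∀ (u : V.carrier) (w1 : W1.carrier) (w2 : W2.carrier) (l m : ℤ) (h : ℂ),
    (∑ᶠ i : ℕ, cchoose m i • I (W1.op u (l + (i : ℤ)) w1) ((m : ℂ) + h - (i : ℂ)) w2)
      = ∑ᶠ i : ℕ, ((-1 : ℂ) ^ i * cchoose l i) •
          (W3.op u (l + m - (i : ℤ)) (I w1 (h + (i : ℂ)) w2)
            - ((-1 : ℂ) ^ l) • I w1 ((l : ℂ) + h - (i : ℂ)) (W2.op u (m + (i : ℤ)) w2)))

/-- The fusion rule `dim I(W₃; W₁W₂)` is finite: the space of intertwining operators of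
the indicated type is finite-dimensional. -/
def FusionFinite {V : VOA} (W1 W2 W3 : OrdModule V) : Prop :=
  FiniteDimensional ℂ
    ↥(Submodule.span ℂ {I : W1.carrier → ℂ → W2.carrier → W3.carrier |
        IsIntertwiner W1 W2 W3 I})

end

/-!
Let `C` be a graded subspace of `W` such that, for every `v`, all `vₚW` with `p ≪ 0` lie in `C`.
For each weight space not contained in `C` choose a functional that kills `C` but not the weight
space, and add these up to a functional `α`. The mode `v*ₙ α` of the adjoint vertex operators
involves only terms `α(u_{2h-n-i-2} w)` for finitely many `u`, all of which vanish for `n ≫ 0`;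
hence `α` lies in `D(W)`. The adjoint vertex operators satisfy the Jacobi identity, so `D(W)` is a
weak module, and semisimplicity of `L(0)` on it makes `α` a finite sum of eigenvectors. As `L(0)` is
self-adjoint, such a sum is supported on finitely many weight spaces, so all but finitely many
weight spaces lie in `C` and `W/C` is finite-dimensional.

For `C = C_n(W)` the condition holds because `(v_{-1-j}1)_{-n}` is a nonzero multiple of
`v_{-n-j}`. For `C = C_1(W)`, the identity
`-n v_{n-1} w = L(-1) v_n w - v_n L(-1) w` trades one step of the mode for one step of the weight of
`w`; after finitely many steps, bounded in terms of the lower bound on the weights, `w` has positive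
weight and `v_p w = (v_p 1)_{-1} w` is in `C_1(W)`.
-/

noncomputable section

open Filter Finset

/-! ### Binomial coefficients and signs -/

lemma cchoose_eq_choose (m : ℤ) (i : ℕ) : cchoose m i = Ring.choose (m : ℂ) i := by
  rw [Ring.choose_eq_smul, ← Polynomial.aeval_eq_smeval, Polynomial.aeval_def,
    Polynomial.eval₂_eq_eval_map, descPochhammer_map, descPochhammer_eval_eq_prod_range,
    smul_eq_mul, cchoose, div_eq_inv_mul]

lemma cchoose_zero_right (m : ℤ) : cchoose m 0 = 1 := by
  rw [cchoose_eq_choose, Ring.choose_zero_right]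

lemma cchoose_zero_left {i : ℕ} (hi : i ≠ 0) : cchoose 0 i = 0 := by
  rw [cchoose_eq_choose, Int.cast_zero, Ring.choose_zero_pos ℂ (Nat.pos_of_ne_zero hi)]

lemma cchoose_add_one_add_one (m : ℤ) (i : ℕ) :
    cchoose (m + 1) (i + 1) = cchoose m i + cchoose m (i + 1) := by
  simp only [cchoose_eq_choose, Int.cast_add, Int.cast_one, Ring.choose_succ_succ]

lemma add_one_mul_cchoose_add_one (m : ℤ) (i : ℕ) :
    ((i : ℂ) + 1) * cchoose m (i + 1) = ((m : ℂ) - i) * cchoose m i := by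
  have hi : (i : ℂ) + 1 ≠ 0 := mod_cast i.succ_ne_zero
  have hfac : (i.factorial : ℂ) ≠ 0 := mod_cast i.factorial_ne_zero
  rw [cchoose, cchoose, prod_range_succ, Nat.factorial_succ]
  push_cast
  field_simp

lemma cchoose_ne_zero {m : ℤ} (hm : m < 0) (i : ℕ) : cchoose m i ≠ 0 := by
  refine div_ne_zero (prod_ne_zero_iff.2 fun j _ => ?_) (mod_cast i.factorial_ne_zero)
  exact mod_cast (show m - j ≠ 0 by omega)

lemma cchoose_neg (m : ℤ) (i : ℕ) : cchoose (-m) i = (-1) ^ i * cchoose (m + i - 1) i := by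
  rw [cchoose_eq_choose, cchoose_eq_choose, Int.cast_neg, Ring.choose_neg, Int.negOnePow_def]
  push_cast
  simp [Units.smul_def]

lemma cchoose_add (m n : ℤ) (i : ℕ) :
    cchoose (m + n) i = ∑ p ∈ antidiagonal i, cchoose m p.1 * cchoose n p.2 := by
  simp only [cchoose_eq_choose, Int.cast_add, Ring.add_choose_eq i (Commute.all (m : ℂ) n)]

/-- Negating the upper entries turns this into Vandermonde's identity, because
`C(a - t, s) = (-1)ˢ C(t + s - a - 1, s)` has an upper entry depending only on `t + s`. -/
lemma sum_antidiagonal_neg_one_pow_mul_cchoose_mul_cchoose_sub (m a : ℤ) (i : ℕ) :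
    ∑ p ∈ antidiagonal i, (-1) ^ p.1 * cchoose m p.1 * cchoose (a - p.1) p.2
      = cchoose (a - m) i := by
  have upper_negation : ∀ p ∈ antidiagonal i,
      (-1) ^ p.1 * cchoose m p.1 * cchoose (a - p.1) p.2
        = (-1) ^ i * (cchoose m p.1 * cchoose (i - a - 1) p.2) := by
    intro p hp
    have hpi : p.1 + p.2 = i := mem_antidiagonal.1 hp
    rw [← neg_sub, cchoose_neg, show (p.1 : ℤ) - a + p.2 - 1 = i - a - 1 by omega, ← hpi, pow_add]
    ring
  rw [sum_congr rfl upper_negation, ← mul_sum, ← cchoose_add, ← neg_sub m a, cchoose_neg,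
    show m - a + i - 1 = m + (i - a - 1) by ring]

lemma neg_one_zpow_mul_self (l : ℤ) : (-1 : ℂ) ^ l * (-1) ^ l = 1 := by
  rw [← mul_zpow, neg_one_mul, neg_neg, one_zpow]

lemma neg_one_zpow_sub_sub_one (m l : ℤ) :
    (-1 : ℂ) ^ (m - l - 1) = -((-1) ^ m * (-1) ^ l) := by
  rw [zpow_sub_one₀ (neg_ne_zero.2 one_ne_zero), zpow_sub₀ (neg_ne_zero.2 one_ne_zero),
    inv_neg_one, mul_neg_one, div_eq_mul_inv, ← eq_inv_of_mul_eq_one_left (neg_one_zpow_mul_self l)]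

/-! ### Finite sums -/

section FiniteSums

variable {M : Type*} [AddCommMonoid M]

lemma sum_range_sum_antidiagonal_eq_sum_sum {f : ℕ → ℕ → M} {A B N : ℕ}
    (hA : ∀ a b, A ≤ a → f a b = 0) (hB : ∀ a b, B ≤ b → f a b = 0) (hN : A + B ≤ N) :
    ∑ n ∈ range N, ∑ p ∈ antidiagonal n, f p.1 p.2 = ∑ a ∈ range A, ∑ b ∈ range B, f a b := by
  simp only [Nat.sum_antidiagonal_eq_sum_range_succ f]
  rw [sum_range_diag_flip, eventually_constant_sum (fun a ha => sum_eq_zero fun b _ => hA a b ha)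
    (Nat.le_of_add_right_le hN)]
  refine sum_congr rfl fun a ha => ?_
  rw [mem_range] at ha
  exact eventually_constant_sum (fun b hb => hB a b hb) (by omega)

lemma hasFiniteSupport_of_eventually_eq_zero {f : ℕ → M} (hf : ∀ᶠ i in atTop, f i = 0) :
    f.HasFiniteSupport := by
  rwa [← Nat.cofinite_eq_atTop] at hf

lemma eventually_finsum_eq_sum_range {f : ℕ → M} (hf : ∀ᶠ i in atTop, f i = 0) :
    ∀ᶠ K in atTop, ∑ᶠ i, f i = ∑ i ∈ range K, f i := by
  obtain ⟨N, hN⟩ := eventually_atTop.1 hf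
  filter_upwards [eventually_ge_atTop N] with K hK
  refine finsum_eq_sum_of_support_subset f fun i hi => ?_
  rw [mem_coe, mem_range]
  by_contra hKi
  exact hi (hN i (hK.trans (not_lt.1 hKi)))

lemma sum_antidiagonal_add_one_left_eq_sum_antidiagonal_add_one_right {f : ℕ → ℕ → M}
    (hleft : ∀ b, f 0 b = 0) (hright : ∀ a, f a 0 = 0) (n : ℕ) :
    ∑ p ∈ antidiagonal n, f (p.1 + 1) p.2 = ∑ p ∈ antidiagonal n, f p.1 (p.2 + 1) := by
  have hsucc : ∑ p ∈ antidiagonal (n + 1), f p.1 p.2 = ∑ p ∈ antidiagonal n, f (p.1 + 1) p.2 := by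
    rw [Nat.sum_antidiagonal_succ, hleft, zero_add]
  rw [← hsucc, Nat.sum_antidiagonal_succ', hright, zero_add]

lemma add_one_smul_sum_antidiagonal_add_one {R : Type*} [Semiring R] [Module R M]
    (f : ℕ → ℕ → M) (r : ℕ) :
    ((r : R) + 1) • ∑ p ∈ antidiagonal (r + 1), f p.1 p.2
      = ∑ p ∈ antidiagonal r,
          (((p.1 : R) + 1) • f (p.1 + 1) p.2 + ((p.2 : R) + 1) • f p.1 (p.2 + 1)) := by
  calc ((r : R) + 1) • ∑ p ∈ antidiagonal (r + 1), f p.1 p.2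
      = ∑ p ∈ antidiagonal (r + 1), (p.1 : R) • f p.1 p.2
          + ∑ p ∈ antidiagonal (r + 1), (p.2 : R) • f p.1 p.2 := by
        rw [smul_sum, ← sum_add_distrib]
        refine sum_congr rfl fun p hp => ?_
        rw [← add_smul, ← Nat.cast_add, mem_antidiagonal.1 hp, Nat.cast_add_one]
    _ = _ := by
        rw [Nat.sum_antidiagonal_succ, Nat.sum_antidiagonal_succ', sum_add_distrib]
        simp only [Nat.cast_zero, zero_smul, zero_add, Nat.cast_add_one]

lemma sum_range_sum_range_cchoose_smul [Module ℂ M] {X : ℕ → M} {S K : ℕ}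
    (hX : ∀ N, S ≤ N → X N = 0) (hK : S ≤ K) (m a : ℤ) :
    ∑ t ∈ range K, ∑ s ∈ range S, ((-1) ^ t * cchoose m t * cchoose (a - t) s) • X (t + s)
      = ∑ N ∈ range K, cchoose (a - m) N • X N := by
  have hXsmul (c : ℂ) (N : ℕ) (hN : S ≤ N) : c • X N = 0 := by rw [hX N hN, smul_zero]
  rw [← sum_range_sum_antidiagonal_eq_sum_sum (N := K + S)
      (f := fun t s => ((-1) ^ t * cchoose m t * cchoose (a - t) s) • X (t + s))
      (fun t s ht => hXsmul _ _ (by omega)) (fun t s hs => hXsmul _ _ (by omega)) le_rfl,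
    ← eventually_constant_sum (n := K + S) (fun N hN => hXsmul _ N (hK.trans hN)) (by omega)]
  refine sum_congr rfl fun N _ => ?_
  rw [← sum_antidiagonal_neg_one_pow_mul_cchoose_mul_cchoose_sub, sum_smul]
  refine sum_congr rfl fun p hp => ?_
  rw [mem_antidiagonal.1 hp]

end FiniteSums

lemma eventually_natCast_add {p : ℤ → Prop} (hp : ∀ᶠ n in atTop, p n) (l : ℤ) :
    ∀ᶠ i : ℕ in atTop, p (l + i) :=
  (tendsto_atTop_add_const_left _ l tendsto_natCast_atTop_atTop).eventually hp

section LinearMaps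

variable {R ι M N : Type*} [Semiring R] [AddCommMonoid M] [Module R M]
  [AddCommMonoid N] [Module R N]

/-- The sum of a family of linear maps that is locally finite, in the sense that only finitely
many members of it are nonzero on any given vector. -/
def finsumLinearMap (f : ι → M →ₗ[R] N) (hf : ∀ x, (fun i => f i x).HasFiniteSupport) :
    M →ₗ[R] N where
  toFun x := ∑ᶠ i, f i x
  map_add' x y := by simp only [map_add, finsum_add_distrib (hf x) (hf y)]
  map_smul' c x := by simp only [map_smul, ← smul_finsum' _ (hf x), RingHom.id_apply]

lemma finsumLinearMap_apply (f : ι → M →ₗ[R] N) (hf : ∀ x, (fun i => f i x).HasFiniteSupport)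
    (x : M) : finsumLinearMap f hf x = ∑ᶠ i, f i x := rfl

lemma iSup_eq_top_of_finsum_eq {p : ι → Submodule R M} {π : ι → M → M}
    (hπ : ∀ i x, π i x ∈ p i) (hsum : ∀ x, ∑ᶠ i, π i x = x) : ⨆ i, p i = ⊤ := by
  refine eq_top_iff.2 fun x _ => ?_
  rw [← hsum x]
  exact finsum_induction (· ∈ ⨆ i, p i) (zero_mem _) (fun _ _ => add_mem)
    fun i => Submodule.mem_iSup_of_mem i (hπ i x)

end LinearMaps

/-! ### Modes on modules -/

namespace VOA

variable (V : VOA)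

/-- The mode `u ↦ uₙ` on `V` as a bilinear map. -/
def opLin (n : ℤ) : V.carrier →ₗ[ℂ] V.carrier →ₗ[ℂ] V.carrier :=
  LinearMap.mk₂ ℂ (fun u v => V.op u n v)
    (fun u₁ u₂ v => (V.op_linear_left n v).map_add u₁ u₂)
    (fun c u v => (V.op_linear_left n v).map_smul c u)
    (fun u => (V.op_linear_right u n).map_add)
    (fun c u => (V.op_linear_right u n).map_smul c)

@[simp]
lemma opLin_apply (n : ℤ) (u v : V.carrier) : V.opLin n u v = V.op u n v := rfl

@[simp]
lemma zero_op (n : ℤ) (v : V.carrier) : V.op 0 n v = 0 := (V.op_linear_left n v).map_zero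

@[simp]
lemma op_zero (u : V.carrier) (n : ℤ) : V.op u n 0 = 0 := (V.op_linear_right u n).map_zero

/-- The adjoint module: `V` as a weak module over itself. -/
def self : WeakModule V where
  carrier := V.carrier
  op := V.op
  op_linear_left := V.op_linear_left
  op_linear_right := V.op_linear_right
  trunc := V.trunc
  one_op := V.one_op
  borcherds := V.borcherds

lemma iSup_wtSpace : ⨆ h, V.wtSpace h = ⊤ := iSup_eq_top_of_finsum_eq V.proj_mem V.proj_sum

variable {V}

@[elab_as_elim]
lemma homogeneous_induction {P : V.carrier → Prop} (v : V.carrier)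
    (homogeneous : ∀ h, ∀ v ∈ V.wtSpace h, P v) (zero : P 0)
    (add : ∀ v₁ v₂, P v₁ → P v₂ → P (v₁ + v₂)) : P v :=
  Submodule.iSup_induction V.wtSpace (motive := P) (by rw [V.iSup_wtSpace]; trivial) homogeneous
    zero add

end VOA

namespace WeakModule

variable {V : VOA} (W : WeakModule V)

/-- The mode `v ↦ vₙ` on a weak module as a bilinear map. -/
def opLin (n : ℤ) : V.carrier →ₗ[ℂ] W.carrier →ₗ[ℂ] W.carrier :=
  LinearMap.mk₂ ℂ (fun v w => W.op v n w)
    (fun v₁ v₂ w => (W.op_linear_left n w).map_add v₁ v₂)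
    (fun c v w => (W.op_linear_left n w).map_smul c v)
    (fun v => (W.op_linear_right v n).map_add)
    (fun c v => (W.op_linear_right v n).map_smul c)

@[simp]
lemma opLin_apply (n : ℤ) (v : V.carrier) (w : W.carrier) : W.opLin n v w = W.op v n w := rfl

@[simp]
lemma zero_op (n : ℤ) (w : W.carrier) : W.op 0 n w = 0 := (W.op_linear_left n w).map_zero

@[simp]
lemma op_zero (v : V.carrier) (n : ℤ) : W.op v n 0 = 0 := (W.op_linear_right v n).map_zero

lemma eventually_borcherds (u v : V.carrier) (w : W.carrier) (l m n : ℤ) :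
    ∀ᶠ K : ℕ in atTop,
      ∑ i ∈ range K, cchoose m i • W.op (V.op u (l + i) v) (m + n - i) w
        = ∑ i ∈ range K, ((-1) ^ i * cchoose l i) •
            (W.op u (l + m - i) (W.op v (n + i) w)
              - (-1 : ℂ) ^ l • W.op v (l + n - i) (W.op u (m + i) w)) := by
  have huv := eventually_natCast_add (eventually_atTop.2 (V.trunc u v)) l
  have hu := eventually_natCast_add (eventually_atTop.2 (W.trunc u w)) m
  have hv := eventually_natCast_add (eventually_atTop.2 (W.trunc v w)) n
  have hleft := eventually_finsum_eq_sum_range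
    (f := fun i : ℕ => cchoose m i • W.op (V.op u (l + i) v) (m + n - i) w) <| by
      filter_upwards [huv] with i hi
      rw [hi, zero_op, smul_zero]
  have hright := eventually_finsum_eq_sum_range
    (f := fun i : ℕ => ((-1) ^ i * cchoose l i) •
      (W.op u (l + m - i) (W.op v (n + i) w)
        - (-1 : ℂ) ^ l • W.op v (l + n - i) (W.op u (m + i) w))) <| by
      filter_upwards [hu, hv] with i hui hvi
      simp only [hui, hvi, op_zero, smul_zero, sub_zero]
  filter_upwards [hleft, hright] with K hKleft hKright
  rw [← hKleft, ← hKright, W.borcherds]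

lemma op_op_sub_op_op (u v : V.carrier) (w : W.carrier) (m n : ℤ) :
    W.op u m (W.op v n w) - W.op v n (W.op u m w)
      = ∑ᶠ i : ℕ, cchoose m i • W.op (V.op u i v) (m + n - i) w := by
  have h := W.borcherds u v w 0 m n
  simp only [zero_add] at h
  rw [h, finsum_eq_single _ 0 fun i hi => by rw [cchoose_zero_left hi, mul_zero, zero_smul]]
  simp [cchoose_zero_right]

lemma op_op_one (v : V.carrier) {l : ℤ} (hl : l < 0) (i : ℕ) (w : W.carrier) :
    W.op (V.op v l V.one) (-1 - i) w = ((-1) ^ i * cchoose l i) • W.op v (l - i) w := by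
  have h := W.borcherds v V.one w l 0 (-1 - i)
  rw [finsum_eq_single _ 0 fun j hj => by rw [cchoose_zero_left hj, zero_smul],
    finsum_eq_single _ i fun j hj => by
      rw [W.one_op, W.one_op, if_neg (by omega), if_neg (by omega), op_zero, smul_zero, sub_zero,
        smul_zero]] at h
  rw [W.one_op, W.one_op, if_pos (by omega), if_neg (by omega), smul_zero, sub_zero] at h
  simpa [cchoose_zero_right] using h

end WeakModule

/-! ### The operator `L(1)` on `V` -/

namespace VOA

variable (V : VOA)

/-- The operator `L(1)` on `V` as a linear map. -/
def L1 : Module.End ℂ V.carrier := V.opLin 2 V.omega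

/-- The divided power `L(1)ⁱ / i!`, the coefficient of `xⁱ` in `e^{xL(1)}`. -/
def L1Div (i : ℕ) : Module.End ℂ V.carrier := (i.factorial : ℂ)⁻¹ • V.L1 ^ i

lemma L1_apply (v : V.carrier) : V.L1 v = V.L 1 v := rfl

lemma L1Div_apply (i : ℕ) (v : V.carrier) :
    V.L1Div i v = (i.factorial : ℂ)⁻¹ • (V.L 1)^[i] v := by
  rw [L1Div, LinearMap.smul_apply, Module.End.pow_apply]
  rfl

@[simp]
lemma L1Div_zero (v : V.carrier) : V.L1Div 0 v = v := by simp [L1Div]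

lemma add_one_smul_L1Div_add_one (i : ℕ) (v : V.carrier) :
    ((i : ℂ) + 1) • V.L1Div (i + 1) v = V.L1 (V.L1Div i v) := by
  have hi : (i : ℂ) + 1 ≠ 0 := mod_cast i.succ_ne_zero
  simp only [L1Div, LinearMap.smul_apply, map_smul, pow_succ', Module.End.mul_apply, smul_smul,
    Nat.factorial_succ]
  congr 1
  push_cast
  field_simp

variable {V} {h : ℤ} {u : V.carrier}

lemma L1_mem_wtSpace (hu : u ∈ V.wtSpace h) : V.L1 u ∈ V.wtSpace (h - 1) := by
  have := V.op_wt 2 h 2 V.omega V.omega_wt u hu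
  rwa [show 2 + h - 2 - 1 = h - 1 by ring] at this

lemma L1Div_mem_wtSpace (hu : u ∈ V.wtSpace h) (i : ℕ) : V.L1Div i u ∈ V.wtSpace (h - i) := by
  refine Submodule.smul_mem _ _ ?_
  induction i with
  | zero => simpa using hu
  | succ i ih =>
    rw [pow_succ', Module.End.mul_apply, Nat.cast_succ, ← sub_sub]
    exact L1_mem_wtSpace ih

lemma eventually_L1Div_eq_zero (v : V.carrier) : ∀ᶠ i in atTop, V.L1Div i v = 0 := by
  induction v using homogeneous_induction with
  | homogeneous h v hv =>
    obtain ⟨N, hN⟩ := V.lower_trunc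
    filter_upwards [eventually_ge_atTop (h - N + 1).toNat] with i hi
    have hmem := L1Div_mem_wtSpace hv i
    rwa [hN _ (by omega), Submodule.mem_bot] at hmem
  | zero => simp
  | add v₁ v₂ ih₁ ih₂ =>
    filter_upwards [ih₁, ih₂] with i h₁ h₂
    rw [map_add, h₁, h₂, add_zero]

lemma L1_op (hu : u ∈ V.wtSpace h) (n : ℤ) (v : V.carrier) :
    V.L1 (V.op u n v) = V.op (V.L1 u) n v + (2 * h - n - 2 : ℂ) • V.op u (n + 1) v
      + V.op u n (V.L1 v) := by
  have hcomm : V.L1 (V.op u n v) - V.op u n (V.L1 v)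
      = ∑ᶠ i : ℕ, cchoose 2 i • V.op (V.op V.omega i u) (2 + n - i) v :=
    V.self.op_op_sub_op_op V.omega u v 2 n
  have hchoose (i : ℕ) : cchoose 2 i = Nat.choose 2 i := by
    rw [cchoose_eq_choose, Int.cast_ofNat, ← Nat.cast_ofNat, Ring.choose_natCast]
  have hsupport : (Function.support fun i : ℕ =>
      cchoose 2 i • V.op (V.op V.omega i u) (2 + n - i) v) ⊆ range 3 := by
    intro i hi
    by_contra hi3
    rw [coe_range, Set.mem_Iio, not_lt] at hi3
    refine hi ?_
    simp only [hchoose, Nat.choose_eq_zero_of_lt (show 2 < i by omega), Nat.cast_zero, zero_smul]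
  rw [← sub_eq_iff_eq_add, hcomm, finsum_eq_sum_of_support_subset _ hsupport]
  have hL0 : V.op (V.op V.omega 1 u) (n + 1) v = (h : ℂ) • V.op u (n + 1) v := by
    rw [V.L_zero h u hu]
    exact (V.op_linear_left _ _).map_smul _ _
  simp only [sum_range_succ, range_zero, sum_empty, hchoose, Nat.choose_zero_right,
    Nat.choose_one_right, Nat.choose_self, Nat.cast_zero, Nat.cast_one, Nat.cast_ofNat,
    V.L_neg_one, sub_zero, show 2 + n - 1 = n + 1 by ring, show 2 + n - 2 = n by ring, hL0]
  change _ + _ + (1 : ℂ) • V.op (V.L1 u) n v = _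
  push_cast
  module

/-- For `u` of weight `h`, the coefficient of `xᶜ` in `e^{xL(1)} uₙ e^{-xL(1)}`. -/
def conjMode (h : ℤ) (u : V.carrier) (n : ℤ) (c : ℕ) : Module.End ℂ V.carrier :=
  ∑ p ∈ antidiagonal c, cchoose (2 * h - n - 2 - p.1) p.2 • V.opLin (n + p.2) (V.L1Div p.1 u)

lemma conjMode_apply (n : ℤ) (c : ℕ) (v : V.carrier) :
    conjMode h u n c v = ∑ p ∈ antidiagonal c,
      cchoose (2 * h - n - 2 - p.1) p.2 • V.op (V.L1Div p.1 u) (n + p.2) v := by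
  simp only [conjMode, LinearMap.sum_apply, LinearMap.smul_apply, opLin_apply]

lemma L1_op_L1Div (hu : u ∈ V.wtSpace h) (a : ℕ) (n : ℤ) (v : V.carrier) :
    V.L1 (V.op (V.L1Div a u) n v) = ((a : ℂ) + 1) • V.op (V.L1Div (a + 1) u) n v
      + (2 * (h - a) - n - 2 : ℂ) • V.op (V.L1Div a u) (n + 1) v
      + V.op (V.L1Div a u) n (V.L1 v) := by
  have hsucc : V.op (V.L1 (V.L1Div a u)) n v = ((a : ℂ) + 1) • V.op (V.L1Div (a + 1) u) n v := by
    rw [← add_one_smul_L1Div_add_one]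
    exact (V.op_linear_left _ _).map_smul _ _
  rw [L1_op (L1Div_mem_wtSpace hu a), hsucc]
  push_cast
  rfl

lemma L1_conjMode (hu : u ∈ V.wtSpace h) (n : ℤ) (c : ℕ) (v : V.carrier) :
    V.L1 (conjMode h u n c v)
      = ((c : ℂ) + 1) • conjMode h u n (c + 1) v + conjMode h u n c (V.L1 v) := by
  let Y (a s : ℕ) : V.carrier := V.op (V.L1Div a u) (n + s) v
  let coeff (a s : ℕ) : ℂ := cchoose (2 * h - n - 2 - a) s
  let corr (a s : ℕ) : ℂ := a * (cchoose (2 * h - n - 2 - a + 1) s - coeff a s)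
  -- `corr` accounts for `C(A - a, s)` becoming `C(A - a - 1, s)` when `a` is raised.
  have term (a s : ℕ) : coeff a s • V.L1 (Y a s)
      = ((a : ℂ) + 1) • coeff (a + 1) s • Y (a + 1) s
        + ((s : ℂ) + 1) • coeff a (s + 1) • Y a (s + 1)
        + corr (a + 1) s • Y (a + 1) s - corr a (s + 1) • Y a (s + 1)
        + coeff a s • V.op (V.L1Div a u) (n + s) (V.L1 v) := by
    have hcoeff : ((s : ℂ) + 1) * coeff a (s + 1) = (2 * h - n - 2 - a - s) * coeff a s := by
      simpa using add_one_mul_cchoose_add_one (2 * h - n - 2 - a) s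
    have hcorr_left : corr (a + 1) s = ((a : ℂ) + 1) * (coeff a s - coeff (a + 1) s) := by
      simp only [corr, coeff, Nat.cast_succ, sub_add_eq_sub_sub, sub_add_cancel]
    have hcorr_right : corr a (s + 1) = a * coeff a s := by
      simp only [corr, coeff, cchoose_add_one_add_one, add_sub_cancel_right]
    simp only [Y, Nat.cast_succ, ← add_assoc, L1_op_L1Div hu, hcorr_left, hcorr_right,
      smul_smul ((s : ℂ) + 1), hcoeff]
    push_cast
    module
  have corr_shift : ∑ p ∈ antidiagonal c, corr (p.1 + 1) p.2 • Y (p.1 + 1) p.2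
      = ∑ p ∈ antidiagonal c, corr p.1 (p.2 + 1) • Y p.1 (p.2 + 1) :=
    sum_antidiagonal_add_one_left_eq_sum_antidiagonal_add_one_right
      (f := fun a s => corr a s • Y a s) (fun s => by simp [corr])
      (fun a => by simp [corr, coeff, cchoose_zero_right]) c
  calc V.L1 (conjMode h u n c v)
      = ∑ p ∈ antidiagonal c, coeff p.1 p.2 • V.L1 (Y p.1 p.2) := by
        simp only [conjMode_apply, map_sum, map_smul, Y, coeff]
    _ = _ := by
        rw [conjMode_apply, add_one_smul_sum_antidiagonal_add_one fun a s => coeff a s • Y a s,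
          conjMode_apply]
        simp only [term, sum_add_distrib, sum_sub_distrib, corr_shift, add_sub_cancel_right, coeff]

lemma L1Div_op (hu : u ∈ V.wtSpace h) (n : ℤ) (v : V.carrier) (r : ℕ) :
    V.L1Div r (V.op u n v) = ∑ p ∈ antidiagonal r, conjMode h u n p.1 (V.L1Div p.2 v) := by
  induction r with
  | zero => simp [conjMode_apply, cchoose_zero_right]
  | succ r ih =>
    have hr : (r : ℂ) + 1 ≠ 0 := mod_cast r.succ_ne_zero
    refine smul_right_injective _ hr ?_
    simp only
    rw [add_one_smul_L1Div_add_one, ih, map_sum,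
      add_one_smul_sum_antidiagonal_add_one fun c b => conjMode h u n c (V.L1Div b v)]
    refine sum_congr rfl fun p _ => ?_
    rw [L1_conjMode hu, ← add_one_smul_L1Div_add_one, map_smul]

end VOA

/-! ### Adjoint modes -/

namespace VOA

variable (V : VOA)

/-- The projection of `V` onto its weight space of weight `h`. -/
def projLin (h : ℤ) : Module.End ℂ V.carrier := IsLinearMap.mk' _ (V.proj_linear h)

lemma projLin_apply (h : ℤ) (v : V.carrier) : V.projLin h v = V.proj h v := rfl

lemma projLin_hasFiniteSupport (v : V.carrier) : (fun h => V.projLin h v).HasFiniteSupport :=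
  V.proj_finite v

end VOA

namespace WeakModule

variable {V : VOA} (W : WeakModule V)

lemma opLin_L1Div_hasFiniteSupport (f : ℕ → ℤ) (v : V.carrier) :
    (fun i => (W.opLin (f i) ∘ₗ V.L1Div i) v).HasFiniteSupport :=
  hasFiniteSupport_of_eventually_eq_zero <| (VOA.eventually_L1Div_eq_zero v).mono fun i hi => by
    rw [LinearMap.comp_apply, hi, map_zero]

/-- The mode `v†ₙ w = (-1)ʰ Σᵢ (1/i!) (L(1)ⁱv)_{2h-n-i-2} w`, bilinear in `v` and `w`, which on `v`
of weight `h` is the coefficient of `x^{-n-1}` in `Y(e^{xL(1)}(-x⁻²)^{L(0)}v, x⁻¹)w`. -/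
def adjModeOfWeight (h n : ℤ) : V.carrier →ₗ[ℂ] W.carrier →ₗ[ℂ] W.carrier :=
  (-1 : ℂ) ^ h • finsumLinearMap (fun i : ℕ => W.opLin (2 * h - n - i - 2) ∘ₗ V.L1Div i)
    (W.opLin_L1Div_hasFiniteSupport fun i => 2 * h - n - i - 2)

lemma adjModeOfWeight_projLin_hasFiniteSupport (n : ℤ) (v : V.carrier) :
    (fun h => (W.adjModeOfWeight h n ∘ₗ V.projLin h) v).HasFiniteSupport :=
  (V.projLin_hasFiniteSupport v).subset <| Function.support_subset_iff'.2 fun h hv => by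
    rw [LinearMap.comp_apply, Function.notMem_support.1 hv, map_zero]

/-- The mode `v†ₙ` of the vertex operator `Y(e^{xL(1)}(-x⁻²)^{L(0)}v, x⁻¹)` on `W`, for arbitrary
`v`; it is the transpose of the mode `v*ₙ` on the dual space of `W`. -/
def adjMode (n : ℤ) : V.carrier →ₗ[ℂ] W.carrier →ₗ[ℂ] W.carrier :=
  finsumLinearMap (fun h => W.adjModeOfWeight h n ∘ₗ V.projLin h)
    (W.adjModeOfWeight_projLin_hasFiniteSupport n)

lemma dmode_eq_apply_adjMode (α : Module.Dual ℂ W.carrier) (v : V.carrier) (n : ℤ)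
    (w : W.carrier) : W.dmode v n α w = α (W.adjMode n v w) := by
  let evalAt : (W.carrier →ₗ[ℂ] W.carrier) →ₗ[ℂ] ℂ := α ∘ₗ LinearMap.applyₗ w
  change _ = evalAt (W.adjMode n v)
  rw [adjMode, finsumLinearMap_apply,
    map_finsum evalAt (W.adjModeOfWeight_projLin_hasFiniteSupport n v)]
  refine finsum_congr fun h => ?_
  change _ = evalAt (W.adjModeOfWeight h n (V.proj h v))
  rw [adjModeOfWeight, LinearMap.smul_apply, map_smul, finsumLinearMap_apply,
    map_finsum evalAt (W.opLin_L1Div_hasFiniteSupport _ _), smul_finsum]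
  refine finsum_congr fun i => ?_
  change _ = (-1 : ℂ) ^ h • α (W.opLin (2 * h - n - i - 2) (V.L1Div i (V.proj h v)) w)
  rw [VOA.L1Div_apply, map_smul, LinearMap.smul_apply, map_smul, smul_smul, smul_eq_mul,
    div_eq_mul_inv, opLin_apply]

variable {W} {h k : ℤ} {u v : V.carrier}

lemma adjMode_eq_sum (hu : u ∈ V.wtSpace h) {R : ℕ} (hR : ∀ i, R ≤ i → V.L1Div i u = 0)
    (n : ℤ) (w : W.carrier) :
    W.adjMode n u w
      = (-1 : ℂ) ^ h • ∑ i ∈ range R, W.op (V.L1Div i u) (2 * h - n - i - 2) w := by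
  have hweight : W.adjMode n u = W.adjModeOfWeight h n u := by
    rw [adjMode, finsumLinearMap_apply, finsum_eq_single _ h fun g hg => by
      rw [LinearMap.comp_apply, VOA.projLin_apply, V.proj_ne h g hg.symm u hu, map_zero]]
    rw [LinearMap.comp_apply, VOA.projLin_apply, V.proj_eq h u hu]
  have hsupport : (Function.support fun i : ℕ =>
      (W.opLin (2 * h - n - i - 2) ∘ₗ V.L1Div i) u) ⊆ range R :=
    Function.support_subset_iff'.2 fun i hi => by
      rw [LinearMap.comp_apply, hR i (by simpa using hi), map_zero]
  rw [hweight, adjModeOfWeight, LinearMap.smul_apply, finsumLinearMap_apply,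
    finsum_eq_sum_of_support_subset _ hsupport, LinearMap.smul_apply, LinearMap.sum_apply]
  rfl

lemma adjMode_adjMode_eq_sum (hu : u ∈ V.wtSpace h) (hv : v ∈ V.wtSpace k) {J : ℕ}
    (huJ : ∀ a, J ≤ a → V.L1Div a u = 0) (hvJ : ∀ b, J ≤ b → V.L1Div b v = 0) (m n : ℤ)
    (w : W.carrier) :
    W.adjMode m u (W.adjMode n v w) = (-1 : ℂ) ^ (h + k) • ∑ a ∈ range J, ∑ b ∈ range J,
      W.op (V.L1Div a u) (2 * h - m - a - 2) (W.op (V.L1Div b v) (2 * k - n - b - 2) w) := by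
  rw [adjMode_eq_sum hv hvJ, map_smul, adjMode_eq_sum hu huJ, smul_smul,
    zpow_add₀ (neg_ne_zero.2 one_ne_zero), mul_comm]
  congr 1
  refine sum_congr rfl fun a _ => ?_
  simp only [← opLin_apply, map_sum]

lemma adjMode_op_eq_sum_conjMode (hu : u ∈ V.wtSpace h) (hv : v ∈ V.wtSpace k) {q : ℤ} {J T : ℕ}
    (hvJ : ∀ b, J ≤ b → V.L1Div b v = 0)
    (hT : ∀ c b, T ≤ c → VOA.conjMode h u q c (V.L1Div b v) = 0) (p : ℤ) (w : W.carrier) :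
    W.adjMode p (V.op u q v) w = (-1 : ℂ) ^ (h + k - q - 1) • ∑ c ∈ range T, ∑ b ∈ range J,
      W.op (VOA.conjMode h u q c (V.L1Div b v)) (2 * (h + k - q - 1) - p - c - b - 2) w := by
  obtain ⟨R, hR⟩ := eventually_atTop.1 (VOA.eventually_L1Div_eq_zero (V.op u q v))
  let Z (c b : ℕ) : W.carrier :=
    W.op (VOA.conjMode h u q c (V.L1Div b v)) (2 * (h + k - q - 1) - p - c - b - 2) w
  have Z_left (c b : ℕ) (hc : T ≤ c) : Z c b = 0 := by
    simp only [Z, hT c b hc, W.zero_op]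
  have Z_right (c b : ℕ) (hb : J ≤ b) : Z c b = 0 := by
    simp only [Z, hvJ b hb, map_zero, W.zero_op]
  rw [adjMode_eq_sum (V.op_wt h k q u hu v hv) (R := T + J + R) fun i hi => hR i (by omega),
    ← sum_range_sum_antidiagonal_eq_sum_sum (N := T + J + R) Z_left Z_right (by omega)]
  congr 1
  refine sum_congr rfl fun r _ => ?_
  rw [VOA.L1Div_op hu, ← W.opLin_apply, map_sum, LinearMap.sum_apply]
  refine sum_congr rfl fun x hx => ?_
  have hxr := mem_antidiagonal.1 hx
  rw [W.opLin_apply, show 2 * (h + k - q - 1) - p - r - 2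
    = 2 * (h + k - q - 1) - p - x.1 - x.2 - 2 by omega]

lemma adjMode_op_eq_sum (hu : u ∈ V.wtSpace h) (hv : v ∈ V.wtSpace k) {q : ℤ} {J S : ℕ}
    (huJ : ∀ a, J ≤ a → V.L1Div a u = 0) (hvJ : ∀ b, J ≤ b → V.L1Div b v = 0)
    (hS : ∀ a b s : ℕ, S ≤ s → V.op (V.L1Div a u) (q + s) (V.L1Div b v) = 0) (p : ℤ)
    (w : W.carrier) :
    W.adjMode p (V.op u q v) w = (-1 : ℂ) ^ (h + k - q - 1) •
      ∑ a ∈ range J, ∑ b ∈ range J, ∑ s ∈ range S, cchoose (2 * h - q - 2 - a) s •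
        W.op (V.op (V.L1Div a u) (q + s) (V.L1Div b v))
          (2 * (h + k - q - 1) - p - a - b - s - 2) w := by
  let X (a b s : ℕ) : W.carrier := cchoose (2 * h - q - 2 - a) s •
    W.op (V.op (V.L1Div a u) (q + s) (V.L1Div b v)) (2 * (h + k - q - 1) - p - a - b - s - 2) w
  have X_left (a b s : ℕ) (ha : J ≤ a) : X a b s = 0 := by
    simp only [X, huJ a ha, V.zero_op, W.zero_op, smul_zero]
  have X_right (a b s : ℕ) (hs : S ≤ s) : X a b s = 0 := by
    simp only [X, hS a b s hs, W.zero_op, smul_zero]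
  have conjMode_eq_zero (c b : ℕ) (hc : J + S ≤ c) :
      VOA.conjMode h u q c (V.L1Div b v) = 0 := by
    rw [VOA.conjMode_apply]
    refine sum_eq_zero fun r hr => ?_
    have hrc := mem_antidiagonal.1 hr
    obtain hrJ | hrS : J ≤ r.1 ∨ S ≤ r.2 := by omega
    · rw [huJ _ hrJ, V.zero_op, smul_zero]
    · rw [hS _ _ _ hrS, smul_zero]
  have op_conjMode_eq (c b : ℕ) : W.op (VOA.conjMode h u q c (V.L1Div b v))
      (2 * (h + k - q - 1) - p - c - b - 2) w = ∑ r ∈ antidiagonal c, X r.1 b r.2 := by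
    simp only [X, VOA.conjMode_apply, ← W.opLin_apply, map_sum, LinearMap.sum_apply]
    refine sum_congr rfl fun r hr => ?_
    have hrc := mem_antidiagonal.1 hr
    rw [map_smul, LinearMap.smul_apply, show 2 * (h + k - q - 1) - p - c - b - 2
      = 2 * (h + k - q - 1) - p - r.1 - b - r.2 - 2 by omega]
  rw [adjMode_op_eq_sum_conjMode hu hv hvJ conjMode_eq_zero]
  simp only [op_conjMode_eq]
  rw [sum_comm, sum_congr rfl fun b _ => sum_range_sum_antidiagonal_eq_sum_sum
    (fun a s ha => X_left a b s ha) (fun a s hs => X_right a b s hs) le_rfl, sum_comm]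

end WeakModule

lemma VOA.exists_op_L1Div_L1Div_eq_zero {V : VOA} {h k : ℤ} {u v : V.carrier}
    (hu : u ∈ V.wtSpace h) (hv : v ∈ V.wtSpace k) (q : ℤ) :
    ∃ S : ℕ, ∀ a b s : ℕ, S ≤ s → V.op (V.L1Div a u) (q + s) (V.L1Div b v) = 0 := by
  obtain ⟨N, hN⟩ := V.lower_trunc
  refine ⟨(h + k - q - N).toNat, fun a b s hs => ?_⟩
  have hmem := V.op_wt _ _ (q + s) _ (L1Div_mem_wtSpace hu a) _ (L1Div_mem_wtSpace hv b)
  rwa [hN _ (by omega), Submodule.mem_bot] at hmem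

namespace WeakModule

variable {V : VOA} (W : WeakModule V) {h k : ℤ} {u v : V.carrier}

lemma sum_cchoose_smul_adjMode_op_eq (hu : u ∈ V.wtSpace h) (hv : v ∈ V.wtSpace k) {l : ℤ}
    {J S K : ℕ} (huJ : ∀ a, J ≤ a → V.L1Div a u = 0) (hvJ : ∀ b, J ≤ b → V.L1Div b v = 0)
    (hS : ∀ a b s : ℕ, S ≤ s → V.op (V.L1Div a u) (l + s) (V.L1Div b v) = 0) (hK : S ≤ K)
    (m n : ℤ) (w : W.carrier) :
    ∑ t ∈ range K, cchoose m t • W.adjMode (m + n - t) (V.op u (l + t) v) w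
      = (-1 : ℂ) ^ (h + k - l - 1) • ∑ a ∈ range J, ∑ b ∈ range J, ∑ N ∈ range K,
          cchoose (2 * h - l - 2 - a - m) N • W.op (V.op (V.L1Div a u) (l + N) (V.L1Div b v))
            ((2 * h - l - 2 - a - m) + (2 * k - l - 2 - b - n) - N) w := by
  let X (a b N : ℕ) : W.carrier := W.op (V.op (V.L1Div a u) (l + N) (V.L1Div b v))
    ((2 * h - l - 2 - a - m) + (2 * k - l - 2 - b - n) - N) w
  have hX (a b N : ℕ) (hN : S ≤ N) : X a b N = 0 := by
    simp only [X, hS a b N hN, zero_op]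
  have hterm (t : ℕ) : W.adjMode (m + n - t) (V.op u (l + t) v) w
      = ((-1) ^ (h + k - l - 1) * (-1) ^ t : ℂ) • ∑ a ∈ range J, ∑ b ∈ range J, ∑ s ∈ range S,
          cchoose (2 * h - l - 2 - a - t) s • X a b (t + s) := by
    rw [adjMode_op_eq_sum hu hv huJ hvJ (S := S) fun a b s hs => by
        rw [add_assoc, ← Nat.cast_add, hS a b _ (by omega)],
      show h + k - (l + t) - 1 = h + k - l - 1 - t by ring,
      zpow_sub₀ (neg_ne_zero.2 one_ne_zero), zpow_natCast, div_eq_mul_inv, ← inv_pow, inv_neg_one]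
    congr 1
    refine sum_congr rfl fun a _ => sum_congr rfl fun b _ => sum_congr rfl fun s _ => ?_
    simp only [X]
    push_cast
    ring_nf
  calc ∑ t ∈ range K, cchoose m t • W.adjMode (m + n - t) (V.op u (l + t) v) w
      = ∑ t ∈ range K, (-1 : ℂ) ^ (h + k - l - 1) • ∑ a ∈ range J, ∑ b ∈ range J,
          ∑ s ∈ range S, ((-1) ^ t * cchoose m t * cchoose (2 * h - l - 2 - a - t) s) •
            X a b (t + s) := by
        refine sum_congr rfl fun t _ => ?_
        simp only [hterm, smul_sum, smul_smul]
        refine sum_congr rfl fun a _ => sum_congr rfl fun b _ => sum_congr rfl fun s _ => ?_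
        congr 1
        ring
    _ = (-1 : ℂ) ^ (h + k - l - 1) • ∑ a ∈ range J, ∑ b ∈ range J, ∑ t ∈ range K,
          ∑ s ∈ range S, ((-1) ^ t * cchoose m t * cchoose (2 * h - l - 2 - a - t) s) •
            X a b (t + s) := by
        rw [← smul_sum, sum_comm]
        exact congrArg _ (sum_congr rfl fun a _ => sum_comm)
    _ = _ := by simp only [sum_range_sum_range_cchoose_smul (hX _ _) hK, X]

lemma eventually_borcherds_adjMode_of_mem_wtSpace (hu : u ∈ V.wtSpace h) (hv : v ∈ V.wtSpace k)
    (w : W.carrier) (l m n : ℤ) :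
    ∀ᶠ K : ℕ in atTop,
      ∑ i ∈ range K, cchoose m i • W.adjMode (m + n - i) (V.op u (l + i) v) w
        = ∑ i ∈ range K, ((-1) ^ i * cchoose l i) •
            (W.adjMode (n + i) v (W.adjMode (l + m - i) u w)
              - (-1 : ℂ) ^ l • W.adjMode (m + i) u (W.adjMode (l + n - i) v w)) := by
  obtain ⟨J, hJ⟩ := eventually_atTop.1
    ((VOA.eventually_L1Div_eq_zero u).and (VOA.eventually_L1Div_eq_zero v))
  obtain ⟨S, hS⟩ := VOA.exists_op_L1Div_L1Div_eq_zero hu hv l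
  have huJ (a : ℕ) (ha : J ≤ a) : V.L1Div a u = 0 := (hJ a ha).1
  have hvJ (b : ℕ) (hb : J ≤ b) : V.L1Div b v = 0 := (hJ b hb).2
  have hborcherds : ∀ᶠ K : ℕ in atTop, ∀ a ∈ range J, ∀ b ∈ range J, _ :=
    (eventually_all_finset _).2 fun a _ => (eventually_all_finset _).2 fun b _ =>
      W.eventually_borcherds (V.L1Div a u) (V.L1Div b v) w l (2 * h - l - 2 - a - m)
        (2 * k - l - 2 - b - n)
  filter_upwards [hborcherds, eventually_ge_atTop S] with K hK hSK
  let P (a b i : ℕ) : W.carrier := W.op (V.L1Div a u) (l + (2 * h - l - 2 - a - m) - i)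
    (W.op (V.L1Div b v) ((2 * k - l - 2 - b - n) + i) w)
  let Q (a b i : ℕ) : W.carrier := W.op (V.L1Div b v) (l + (2 * k - l - 2 - b - n) - i)
    (W.op (V.L1Div a u) ((2 * h - l - 2 - a - m) + i) w)
  have hP (i : ℕ) : W.adjMode (m + i) u (W.adjMode (l + n - i) v w)
      = (-1 : ℂ) ^ (h + k) • ∑ a ∈ range J, ∑ b ∈ range J, P a b i := by
    rw [adjMode_adjMode_eq_sum hu hv huJ hvJ]
    simp only [P]
    ring_nf
  have hQ (i : ℕ) : W.adjMode (n + i) v (W.adjMode (l + m - i) u w)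
      = (-1 : ℂ) ^ (h + k) • ∑ a ∈ range J, ∑ b ∈ range J, Q a b i := by
    rw [adjMode_adjMode_eq_sum hv hu hvJ huJ, sum_comm, add_comm k h]
    simp only [Q]
    ring_nf
  rw [W.sum_cchoose_smul_adjMode_op_eq hu hv huJ hvJ hS hSK,
    sum_congr rfl fun a ha => sum_congr rfl fun b hb => hK a ha b hb]
  calc _ = (-1 : ℂ) ^ (h + k - l - 1) • ∑ a ∈ range J, ∑ i ∈ range K, ∑ b ∈ range J,
          ((-1) ^ i * cchoose l i) • (P a b i - (-1 : ℂ) ^ l • Q a b i) := by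
        exact congrArg _ (sum_congr rfl fun a _ => sum_comm)
    _ = _ := by
        rw [sum_comm, smul_sum]
        refine sum_congr rfl fun i _ => ?_
        simp only [hP, hQ, neg_one_zpow_sub_sub_one, ← smul_sum, sum_sub_distrib]
        generalize ∑ a ∈ range J, ∑ b ∈ range J, P a b i = p
        generalize ∑ a ∈ range J, ∑ b ∈ range J, Q a b i = q
        linear_combination (norm := module)
          ((-1 : ℂ) ^ i * cchoose l i * (-1 : ℂ) ^ (h + k) * neg_one_zpow_mul_self l) • q

lemma eventually_borcherds_adjMode (u v : V.carrier) (w : W.carrier) (l m n : ℤ) :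
    ∀ᶠ K : ℕ in atTop,
      ∑ i ∈ range K, cchoose m i • W.adjMode (m + n - i) (V.op u (l + i) v) w
        = ∑ i ∈ range K, ((-1) ^ i * cchoose l i) •
            (W.adjMode (n + i) v (W.adjMode (l + m - i) u w)
              - (-1 : ℂ) ^ l • W.adjMode (m + i) u (W.adjMode (l + n - i) v w)) := by
  simp only [← VOA.opLin_apply]
  induction u using VOA.homogeneous_induction with
  | homogeneous h u hu =>
    induction v using VOA.homogeneous_induction with
    | homogeneous k v hv => exact W.eventually_borcherds_adjMode_of_mem_wtSpace hu hv w l m n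
    | zero => simp
    | add v₁ v₂ ih₁ ih₂ =>
      filter_upwards [ih₁, ih₂] with K hK₁ hK₂
      simp only [map_add, LinearMap.add_apply, smul_add, sum_add_distrib, hK₁, hK₂,
        add_sub_add_comm]
  | zero => simp
  | add u₁ u₂ ih₁ ih₂ =>
    filter_upwards [ih₁, ih₂] with K hK₁ hK₂
    simp only [map_add, LinearMap.add_apply, smul_add, sum_add_distrib, hK₁, hK₂,
      add_sub_add_comm]

end WeakModule

/-! ### The weak module `D(W)` -/

namespace VOA

variable (V : VOA)

lemma L1_one : V.L1 V.one = 0 := V.create_nonneg _ _ zero_le_two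

lemma L1_omega : V.L1 V.omega = 0 := by
  have h := V.virasoro 1 (-2) V.one
  norm_num at h
  rw [V.create, V.create_nonneg _ 2 zero_le_two, V.create_nonneg _ 0 le_rfl, op_zero] at h
  simpa [L1_apply, L] using h

end VOA

namespace WeakModule

variable {V : VOA} (W : WeakModule V)

lemma adjMode_of_L1_eq_zero {h : ℤ} {u : V.carrier} (hu : u ∈ V.wtSpace h) (hu0 : V.L1 u = 0)
    (n : ℤ) (w : W.carrier) : W.adjMode n u w = (-1 : ℂ) ^ h • W.op u (2 * h - n - 2) w := by
  have hL1Div (i : ℕ) (hi : 1 ≤ i) : V.L1Div i u = 0 := by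
    obtain ⟨j, rfl⟩ := Nat.exists_eq_add_of_le' hi
    rw [VOA.L1Div, pow_succ, LinearMap.smul_apply, Module.End.mul_apply, hu0, map_zero, smul_zero]
  simp [adjMode_eq_sum hu hL1Div]

lemma adjMode_one (n : ℤ) (w : W.carrier) :
    W.adjMode n V.one w = if n = -1 then w else 0 := by
  rw [W.adjMode_of_L1_eq_zero V.one_wt V.L1_one, W.one_op, zpow_zero, one_smul]
  exact if_congr (by omega) rfl rfl

lemma adjMode_comp_adjMode_sub {u v : V.carrier} {T : ℕ} (hT : ∀ t : ℕ, T ≤ t → V.op v t u = 0)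
    (m n : ℤ) :
    W.adjMode m u ∘ₗ W.adjMode n v - W.adjMode n v ∘ₗ W.adjMode m u
      = ∑ t ∈ range T, cchoose n t • W.adjMode (n + m - t) (V.op v t u) := by
  ext w
  obtain ⟨K, hK, hTK⟩ := ((W.eventually_borcherds_adjMode v u w 0 n m).and
    (eventually_ge_atTop (T + 1))).exists
  simp only [zero_add] at hK
  rw [eventually_constant_sum (fun t ht => by
      rw [hT t ht, map_zero, LinearMap.zero_apply, smul_zero]) (show T ≤ K by omega)] at hK
  calc _ = ∑ i ∈ range K, ((-1) ^ i * cchoose 0 i) •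
          (W.adjMode (m + i) u (W.adjMode (n - i) v w)
            - (-1 : ℂ) ^ (0 : ℤ) • W.adjMode (n + i) v (W.adjMode (m - i) u w)) := by
        rw [sum_eq_single_of_mem 0 (mem_range.2 (by omega)) fun i _ hi => by
          rw [cchoose_zero_left hi, mul_zero, zero_smul]]
        simp [cchoose_zero_right]
    _ = _ := by
        rw [← hK]
        simp only [LinearMap.sum_apply, LinearMap.smul_apply]

variable {W}

lemma coe_mem_DW_iff {α : Module.Dual ℂ W.carrier} :
    ⇑α ∈ W.DW ↔ ∀ v, ∀ᶠ n in atTop, α ∘ₗ W.adjMode n v = 0 := by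
  simp only [DW, Set.mem_ofPred_eq, α.isLinear, true_and, dmode_eq_apply_adjMode,
    eventually_atTop, LinearMap.ext_iff, LinearMap.comp_apply, LinearMap.zero_apply]

variable (W)

/-- `D(W)` as a subspace of the full dual space of `W`. -/
def dualSubmodule : Submodule ℂ (Module.Dual ℂ W.carrier) where
  carrier := {α | ⇑α ∈ W.DW}
  zero_mem' := coe_mem_DW_iff.2 fun v => by simp
  add_mem' {α β} hα hβ := coe_mem_DW_iff.2 fun v => by
    filter_upwards [coe_mem_DW_iff.1 hα v, coe_mem_DW_iff.1 hβ v] with n hαn hβn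
    rw [LinearMap.add_comp, hαn, hβn, add_zero]
  smul_mem' c α hα := coe_mem_DW_iff.2 fun v => by
    filter_upwards [coe_mem_DW_iff.1 hα v] with n hαn
    rw [LinearMap.smul_comp, hαn, smul_zero]

variable {W}

lemma mem_dualSubmodule {α : Module.Dual ℂ W.carrier} :
    α ∈ W.dualSubmodule ↔ ∀ v, ∀ᶠ n in atTop, α ∘ₗ W.adjMode n v = 0 := coe_mem_DW_iff

lemma comp_adjMode_mem_dualSubmodule {α : Module.Dual ℂ W.carrier} (hα : α ∈ W.dualSubmodule)
    (u : V.carrier) (m : ℤ) : α ∘ₗ W.adjMode m u ∈ W.dualSubmodule := by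
  rw [mem_dualSubmodule] at hα ⊢
  intro v
  obtain ⟨T, hT⟩ : ∃ T : ℕ, ∀ t : ℕ, T ≤ t → V.op v t u = 0 := by
    simpa using eventually_atTop.1 (eventually_natCast_add (eventually_atTop.2 (V.trunc v u)) 0)
  have hcorrection : ∀ᶠ n in atTop, ∀ t ∈ range T,
      α ∘ₗ W.adjMode (n + (m - t)) (V.op v t u) = 0 :=
    (eventually_all_finset _).2 fun t _ =>
      (tendsto_atTop_add_const_right _ (m - t : ℤ) tendsto_id).eventually (hα (V.op v t u))
  filter_upwards [hα v, hcorrection] with n hn hcorr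
  have hsum : α ∘ₗ ∑ t ∈ range T, cchoose n t • W.adjMode (n + m - t) (V.op v t u) = 0 := by
    ext w
    rw [LinearMap.comp_apply, LinearMap.sum_apply, map_sum]
    refine sum_eq_zero fun t ht => ?_
    rw [LinearMap.smul_apply, map_smul, add_sub_assoc, ← LinearMap.comp_apply, hcorr t ht,
      LinearMap.zero_apply, smul_zero]
  rw [LinearMap.comp_assoc, eq_add_of_sub_eq (W.adjMode_comp_adjMode_sub hT m n),
    LinearMap.comp_add, hsum, ← LinearMap.comp_assoc, hn, LinearMap.zero_comp, add_zero]

/-- The mode `v*ₙ` on `D(W)`, the transpose of `v†ₙ`. -/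
def dualOp (v : V.carrier) (n : ℤ) (α : W.dualSubmodule) : W.dualSubmodule :=
  ⟨α ∘ₗ W.adjMode n v, comp_adjMode_mem_dualSubmodule α.2 v n⟩

lemma dualOp_apply (v : V.carrier) (n : ℤ) (α : W.dualSubmodule) (w : W.carrier) :
    (dualOp v n α : Module.Dual ℂ W.carrier) w
      = (α : Module.Dual ℂ W.carrier) (W.adjMode n v w) := rfl

lemma dualOp_zero_left (n : ℤ) (α : W.dualSubmodule) : dualOp 0 n α = 0 := by
  ext
  simp [dualOp_apply]

lemma dualOp_zero_right (v : V.carrier) (n : ℤ) :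
    dualOp v n (0 : W.dualSubmodule) = 0 := by
  ext
  simp [dualOp_apply]

lemma eventually_dualOp_eq_zero (v : V.carrier) (α : W.dualSubmodule) :
    ∀ᶠ n in atTop, dualOp v n α = 0 :=
  (mem_dualSubmodule.1 α.2 v).mono fun _ hn => Subtype.ext hn

lemma dualOp_borcherds (u v : V.carrier) (α : W.dualSubmodule) (l m n : ℤ) :
    ∑ᶠ i : ℕ, cchoose m i • dualOp (V.op u (l + i) v) (m + n - i) α
      = ∑ᶠ i : ℕ, ((-1) ^ i * cchoose l i) •
          (dualOp u (l + m - i) (dualOp v (n + i) α)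
            - (-1 : ℂ) ^ l • dualOp v (l + n - i) (dualOp u (m + i) α)) := by
  have huv := eventually_natCast_add (eventually_atTop.2 (V.trunc u v)) l
  have hu := eventually_natCast_add (eventually_dualOp_eq_zero u α) m
  have hv := eventually_natCast_add (eventually_dualOp_eq_zero v α) n
  have hleft := eventually_finsum_eq_sum_range
    (f := fun i : ℕ => cchoose m i • dualOp (V.op u (l + i) v) (m + n - i) α) <| by
      filter_upwards [huv] with i hi
      rw [hi, dualOp_zero_left, smul_zero]
  have hright := eventually_finsum_eq_sum_range
    (f := fun i : ℕ => ((-1) ^ i * cchoose l i) •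
      (dualOp u (l + m - i) (dualOp v (n + i) α)
        - (-1 : ℂ) ^ l • dualOp v (l + n - i) (dualOp u (m + i) α))) <| by
      filter_upwards [hu, hv] with i hui hvi
      simp only [hui, hvi, dualOp_zero_right, smul_zero, sub_zero]
  ext w
  obtain ⟨K, hKleft, hKright, hK⟩ :=
    (hleft.and (hright.and (W.eventually_borcherds_adjMode u v w l m n))).exists
  rw [hKleft, hKright]
  simpa only [Submodule.coe_sum, LinearMap.sum_apply, Submodule.coe_smul, Submodule.coe_sub,
    LinearMap.smul_apply, LinearMap.sub_apply, dualOp_apply, map_sum, map_smul, map_sub]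
    using congrArg (α : Module.Dual ℂ W.carrier) hK

variable (W)

/-- The weak module `D(W)`, on which `v ∈ V` acts through the adjoint vertex operator. -/
def dualModule : WeakModule V where
  carrier := W.dualSubmodule
  op := dualOp
  op_linear_left n α := ⟨fun u v => by ext w; simp [dualOp_apply],
    fun c v => by ext w; simp [dualOp_apply]⟩
  op_linear_right v n := ⟨fun α β => rfl, fun c α => rfl⟩
  trunc v α := eventually_atTop.1 (eventually_dualOp_eq_zero v α)
  one_op n α := by
    ext w
    rw [dualOp_apply, adjMode_one]
    split_ifs <;> simp
  borcherds := dualOp_borcherds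

variable {W}

lemma mem_eig_iff {h : ℂ} {w : W.carrier} : w ∈ W.eig h ↔ W.op V.omega 1 w = h • w := by
  rw [eig, LinearMap.mem_ker, LinearMap.sub_apply, sub_eq_zero]
  rfl

end WeakModule

namespace GenModule

variable {V : VOA} {W : GenModule V}

lemma eq_of_mem_eig_of_mem_wt {α : W.dualSubmodule} {g h : ℂ} (hα : α ∈ W.dualModule.eig g)
    {w : W.carrier} (hw : w ∈ W.wt h) (hαw : (α : Module.Dual ℂ W.carrier) w ≠ 0) : h = g := by
  have hL0 : W.adjMode 1 V.omega w = h • w := by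
    rw [W.adjMode_of_L1_eq_zero V.omega_wt V.L1_omega, ← W.wt_L0 h w hw]
    norm_num
  have heig : (α : Module.Dual ℂ W.carrier) (W.adjMode 1 V.omega w)
      = g • (α : Module.Dual ℂ W.carrier) w :=
    LinearMap.congr_fun (congrArg Subtype.val (WeakModule.mem_eig_iff.1 hα)) w
  rw [hL0, map_smul] at heig
  exact smul_left_injective ℂ hαw heig

lemma mem_restrictedDual_of_mem_iSup_eig {α : W.dualSubmodule}
    (hα : α ∈ ⨆ g, W.dualModule.eig g) :
    ⇑(α : Module.Dual ℂ W.carrier) ∈ W.restrictedDual := by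
  refine ⟨LinearMap.isLinear _, ?_⟩
  refine Submodule.iSup_induction (motive := fun α : W.dualSubmodule =>
    {h : ℂ | ∃ w ∈ W.wt h, (α : Module.Dual ℂ W.carrier) w ≠ 0}.Finite) _ hα ?_ ?_ ?_
  · rintro g α hα
    refine (Set.finite_singleton g).subset ?_
    rintro h ⟨w, hw, hαw⟩
    exact eq_of_mem_eig_of_mem_wt hα hw hαw
  · simp
  · rintro α β hα hβ
    refine (hα.union hβ).subset ?_
    rintro h ⟨w, hw, hαβw⟩
    by_cases hαw : (α : Module.Dual ℂ W.carrier) w = 0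
    · exact Or.inr ⟨w, hw, by simpa [hαw] using hαβw⟩
    · exact Or.inl ⟨w, hw, hαw⟩

end GenModule

/-! ### Finite-dimensional quotients -/

lemma WeakModule.mem_dualSubmodule_of_le_ker {V : VOA} {W : WeakModule V}
    {C : Submodule ℂ W.carrier} {α : Module.Dual ℂ W.carrier} (hα : C ≤ LinearMap.ker α)
    (hC : ∀ v, ∀ᶠ p in atBot, ∀ w, W.op v p w ∈ C) : α ∈ W.dualSubmodule := by
  refine mem_dualSubmodule.2 fun v => ?_
  induction v using VOA.homogeneous_induction with
  | homogeneous h v hv =>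
    obtain ⟨R, hR⟩ := eventually_atTop.1 (VOA.eventually_L1Div_eq_zero v)
    have hmem : ∀ᶠ n in atTop, ∀ i ∈ range R, ∀ w,
        W.op (V.L1Div i v) (2 * h - n - i - 2) w ∈ C := by
      refine (eventually_all_finset _).2 fun i _ => ?_
      have hbot : Tendsto (fun n : ℤ => 2 * h - n - i - 2) atTop atBot :=
        tendsto_atBot.2 fun b => by
          filter_upwards [eventually_ge_atTop (2 * h - i - 2 - b)] with n hn
          omega
      exact hbot.eventually (hC (V.L1Div i v))
    filter_upwards [hmem] with n hn
    ext w
    rw [LinearMap.comp_apply, adjMode_eq_sum hv hR]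
    exact hα (C.smul_mem _ (C.sum_mem fun i hi => hn i hi w))
  | zero => simp
  | add v₁ v₂ ih₁ ih₂ =>
    filter_upwards [ih₁, ih₂] with n h₁ h₂
    rw [map_add, LinearMap.comp_add, h₁, h₂, add_zero]

namespace GenModule

variable {V : VOA} (W : GenModule V)

/-- The projection of `W` onto its weight space of weight `h`. -/
def projWLin (h : ℂ) : Module.End ℂ W.carrier := IsLinearMap.mk' _ (W.projW_linear h)

lemma projWLin_apply (h : ℂ) (w : W.carrier) : W.projWLin h w = W.projW h w := rfl

lemma iSup_wt : ⨆ h, W.wt h = ⊤ := iSup_eq_top_of_finsum_eq W.projW_mem W.projW_sum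

variable {W}

@[elab_as_elim]
lemma homogeneous_induction {P : W.carrier → Prop} (w : W.carrier)
    (homogeneous : ∀ h, ∀ w ∈ W.wt h, P w) (zero : P 0)
    (add : ∀ w₁ w₂, P w₁ → P w₂ → P (w₁ + w₂)) : P w :=
  Submodule.iSup_induction W.wt (motive := P) (by rw [W.iSup_wt]; trivial) homogeneous zero add

/-- A subspace `C` of `W` is graded if it is the sum of its intersections with the weight spaces,
that is, if it is stable under the projections onto the weight spaces. -/
def IsGraded (C : Submodule ℂ W.carrier) : Prop := ∀ h, C ≤ C.comap (W.projWLin h)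

lemma isGraded_span {s : Set W.carrier}
    (hs : ∀ h, ∀ x ∈ s, W.projW h x ∈ Submodule.span ℂ s) : IsGraded (Submodule.span ℂ s) :=
  fun h => Submodule.span_le.2 (hs h)

/-- Choose for each weight space not contained in `C` a functional that kills `C` but not that
weight space, and add these up along the grading. -/
lemma IsGraded.exists_le_ker {C : Submodule ℂ W.carrier} (hC : IsGraded C) :
    ∃ α : Module.Dual ℂ W.carrier,
      C ≤ LinearMap.ker α ∧ ∀ h, ¬ W.wt h ≤ C → ∃ w ∈ W.wt h, α w ≠ 0 := by
  have hexists (h : ℂ) : ∃ f : Module.Dual ℂ W.carrier,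
      C ≤ LinearMap.ker f ∧ (¬ W.wt h ≤ C → ∃ w ∈ W.wt h, f w ≠ 0) := by
    by_cases hh : W.wt h ≤ C
    · exact ⟨0, by simp, fun hn => absurd hh hn⟩
    · obtain ⟨w, hw, hwC⟩ := SetLike.not_le_iff_exists.1 hh
      obtain ⟨f, hfw, hfC⟩ := Submodule.exists_le_ker_of_notMem hwC
      exact ⟨f, hfC, fun _ => ⟨w, hw, hfw⟩⟩
  choose f hfC hf using hexists
  have hfin (x : W.carrier) : (fun h => (f h ∘ₗ W.projWLin h) x).HasFiniteSupport :=
    (W.projW_finite x).subset <| Function.support_subset_iff'.2 fun h hx => by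
      rw [LinearMap.comp_apply, projWLin_apply, Function.notMem_support.1 hx, map_zero]
  refine ⟨finsumLinearMap (fun h => f h ∘ₗ W.projWLin h) hfin, fun x hx => ?_, fun h hh => ?_⟩
  · rw [LinearMap.mem_ker, finsumLinearMap_apply]
    exact finsum_eq_zero_of_forall_eq_zero fun h => hfC h (hC h hx)
  · obtain ⟨w, hw, hfw⟩ := hf h hh
    refine ⟨w, hw, ?_⟩
    rw [finsumLinearMap_apply, finsum_eq_single _ h fun g hg => by
      rw [LinearMap.comp_apply, projWLin_apply, W.projW_ne h g hg.symm w hw, map_zero]]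
    rwa [LinearMap.comp_apply, projWLin_apply, W.projW_eq h w hw]

lemma finiteDimensional_quotient_of_finite {C : Submodule ℂ W.carrier}
    (hfd : ∀ h, FiniteDimensional ℂ (W.wt h)) (hC : {h | ¬ W.wt h ≤ C}.Finite) :
    FiniteDimensional ℂ (W.carrier ⧸ C) := by
  have : Finite {h | ¬ W.wt h ≤ C} := hC
  have hfg : (⨆ h : {h | ¬ W.wt h ≤ C}, (W.wt h).map C.mkQ).FG :=
    Submodule.fg_iSup _ fun h => ((Submodule.fg_top _).1 (hfd h).fg_top).map _
  have htop : ⨆ h : {h | ¬ W.wt h ≤ C}, (W.wt h).map C.mkQ = ⊤ := by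
    rw [← Submodule.range_mkQ C, LinearMap.range_eq_map, ← W.iSup_wt, Submodule.map_iSup]
    refine le_antisymm (iSup_le fun h => le_iSup (fun h => (W.wt h).map C.mkQ) h.1)
      (iSup_le fun h => ?_)
    by_cases hh : W.wt h ≤ C
    · exact (Submodule.map_le_iff_le_comap.2 (hh.trans (C.le_comap_mkQ ⊥))).trans bot_le
    · exact le_iSup (fun h : {h | ¬ W.wt h ≤ C} => (W.wt h).map C.mkQ) ⟨h, hh⟩
  exact Module.finite_def.2 (htop ▸ hfg)

lemma IsGraded.finiteDimensional_quotient {C : Submodule ℂ W.carrier} (hC : IsGraded C)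
    (hop : ∀ v, ∀ᶠ p in atBot, ∀ w, W.op v p w ∈ C) (hfd : ∀ h, FiniteDimensional ℂ (W.wt h))
    (hss : ⨆ h, W.dualModule.eig h = ⊤) : FiniteDimensional ℂ (W.carrier ⧸ C) := by
  obtain ⟨α, hαC, hα⟩ := hC.exists_le_ker
  let α' : W.dualSubmodule := ⟨α, WeakModule.mem_dualSubmodule_of_le_ker hαC hop⟩
  have hα' : α' ∈ ⨆ h, W.dualModule.eig h := by
    rw [hss]
    trivial
  have hα_dual : ⇑α ∈ W.restrictedDual := mem_restrictedDual_of_mem_iSup_eig hα'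
  exact finiteDimensional_quotient_of_finite hfd (hα_dual.2.subset hα)

end GenModule

/-! ### The subspaces `C_n(W)` -/

namespace WeakModule

variable {V : VOA} (W : WeakModule V)

lemma op_mem_Cn {n p : ℤ} (hn : 1 ≤ n) (hp : p ≤ -n) (v : V.carrier) (w : W.carrier) :
    W.op v p w ∈ W.Cn n := by
  obtain ⟨i, rfl⟩ : ∃ i : ℕ, n = i + 1 := ⟨(n - 1).toNat, by omega⟩
  have hmem : W.op (V.op v (p + i) V.one) (-(i + 1)) w ∈ W.Cn (i + 1) :=
    Submodule.subset_span ⟨_, _, rfl⟩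
  rw [show -((i : ℤ) + 1) = -1 - i by ring, W.op_op_one v (by omega), add_sub_cancel_right]
    at hmem
  exact (Submodule.smul_mem_iff _ (mul_ne_zero (pow_ne_zero _ (neg_ne_zero.2 one_ne_zero))
    (cchoose_ne_zero (by omega) i))).1 hmem

end WeakModule

namespace GenModule

variable {V : VOA} (W : GenModule V)

lemma projW_op {k : ℤ} {v : V.carrier} (hv : v ∈ V.wtSpace k) (h : ℂ) (n : ℤ) (w : W.carrier) :
    W.projW h (W.op v n w) = W.op v n (W.projW (h - k + n + 1) w) := by
  simp only [← projWLin_apply, ← WeakModule.opLin_apply]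
  induction w using homogeneous_induction with
  | homogeneous g w hw =>
    have hmem := W.wt_op k v hv g n w hw
    simp only [projWLin_apply, WeakModule.opLin_apply]
    by_cases hg : g = h - k + n + 1
    · have hh : g + k - n - 1 = h := by rw [hg]; ring
      rw [← hg, W.projW_eq g w hw, W.projW_eq h _ (hh ▸ hmem)]
    · rw [W.projW_ne g _ hg w hw, WeakModule.op_zero]
      exact W.projW_ne _ h (fun hh => hg (by rw [← hh]; ring)) _ hmem
  | zero => simp only [map_zero]
  | add w₁ w₂ ih₁ ih₂ => simp only [map_add, ih₁, ih₂]

lemma isGraded_Cn (n : ℤ) : IsGraded (W := W) (W.Cn n) := by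
  refine isGraded_span ?_
  rintro h _ ⟨v, w, rfl⟩
  change _ ∈ W.Cn n
  rw [← projWLin_apply, ← WeakModule.opLin_apply]
  induction v using VOA.homogeneous_induction with
  | homogeneous k v hv =>
    rw [projWLin_apply, WeakModule.opLin_apply, W.projW_op hv]
    exact Submodule.subset_span ⟨_, _, rfl⟩
  | zero => simp
  | add v₁ v₂ ih₁ ih₂ =>
    rw [map_add, LinearMap.add_apply, map_add]
    exact add_mem ih₁ ih₂

end GenModule

/-! ### The subspace `C_1(W)` -/

lemma VOA.mem_pos_of_mem_wtSpace (V : VOA) {k : ℤ} (hk : 1 ≤ k) {v : V.carrier}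
    (hv : v ∈ V.wtSpace k) : v ∈ V.pos :=
  Submodule.mem_iSup_of_mem k (Submodule.mem_iSup_of_mem hk hv)

namespace WeakModule

variable {V : VOA} (W : WeakModule V)

lemma op_op_omega_zero (v : V.carrier) (n : ℤ) (w : W.carrier) :
    W.op (V.op V.omega 0 v) n w
      = W.op V.omega 0 (W.op v n w) - W.op v n (W.op V.omega 0 w) := by
  rw [op_op_sub_op_op, finsum_eq_single _ 0 fun i hi => by rw [cchoose_zero_left hi, zero_smul]]
  simp [cchoose_zero_right]

lemma op_op_omega_zero_of_neg (v : V.carrier) {n : ℤ} (hn : n < 0) (w : W.carrier) :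
    W.op (V.op V.omega 0 v) n w = (-n : ℂ) • W.op v (n - 1) w := by
  obtain ⟨i, rfl⟩ : ∃ i : ℕ, n = -1 - i := ⟨(-1 - n).toNat, by omega⟩
  have hderiv : V.op V.omega 0 v = V.op v (-2) V.one := by
    have h := V.L_neg_one v (-1) V.one
    rw [V.create] at h
    simpa using h
  have hcchoose : cchoose (-2) i = (-1) ^ i * (i + 1) := by
    rw [cchoose_neg, cchoose_eq_choose, show ((2 + i - 1 : ℤ) : ℂ) = (i + 1 : ℕ) by push_cast; ring,
      Ring.choose_natCast, Nat.choose_succ_self_right, Nat.cast_add_one]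
  rw [hderiv, W.op_op_one v (by norm_num), hcchoose, ← mul_assoc, ← mul_pow,
    show (-2 - i : ℤ) = -1 - i - 1 by ring]
  simp

end WeakModule

namespace GenModule

variable {V : VOA} (W : GenModule V)

lemma op_neg_one_mem_C1W {v : V.carrier} (hv : v ∈ V.pos) {w : W.carrier} (hw : w ∈ W.posW) :
    W.op v (-1) w ∈ W.C1W :=
  Submodule.subset_span (Or.inl ⟨v, hv, w, hw, rfl⟩)

lemma op_omega_zero_mem_C1W (w : W.carrier) : W.op V.omega 0 w ∈ W.C1W :=
  Submodule.subset_span (Or.inr ⟨w, rfl⟩)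

lemma mem_posW_of_mem_wt {h : ℂ} (hh : 0 < h.re) {w : W.carrier} (hw : w ∈ W.wt h) :
    w ∈ W.posW :=
  Submodule.mem_iSup_of_mem h (Submodule.mem_iSup_of_mem hh hw)

lemma projW_mem_posW {w : W.carrier} (hw : w ∈ W.posW) (h : ℂ) : W.projW h w ∈ W.posW := by
  suffices W.posW ≤ W.posW.comap (W.projWLin h) from this hw
  refine iSup₂_le fun g hg w hw => ?_
  rw [Submodule.mem_comap, projWLin_apply]
  obtain rfl | hgh := eq_or_ne g h
  · exact W.mem_posW_of_mem_wt hg (W.projW_mem g w)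
  · rw [W.projW_ne g h hgh w hw]
    exact zero_mem _

lemma isGraded_C1W : IsGraded (W := W) W.C1W := by
  refine isGraded_span ?_
  rintro h _ (⟨v, hv, w, hw, rfl⟩ | ⟨w, rfl⟩) <;> change _ ∈ W.C1W
  · suffices V.pos ≤ (W.C1W.comap (W.projWLin h)).comap ((W.opLin (-1)).flip w) from this hv
    refine iSup₂_le fun k hk v hv => ?_
    change W.projW h (W.op v (-1) w) ∈ W.C1W
    rw [W.projW_op hv]
    exact W.op_neg_one_mem_C1W (V.mem_pos_of_mem_wtSpace hk hv) (W.projW_mem_posW hw _)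
  · rw [W.projW_op V.omega_wt]
    exact W.op_omega_zero_mem_C1W _

lemma op_mem_C1W {k : ℤ} {v : V.carrier} (hv : v ∈ V.wtSpace k) (j : ℕ) {p : ℤ}
    (hp : p ≤ -1 - j) (hpk : p + j + 2 ≤ k) {h : ℂ} (hh : 0 < h.re + j) {w : W.carrier}
    (hw : w ∈ W.wt h) : W.op v p w ∈ W.C1W := by
  induction j generalizing p h w with
  | zero =>
    have hcreate := W.op_op_one v (l := p) (by omega) 0 w
    simp only [CharP.cast_eq_zero, sub_zero, pow_zero, cchoose_zero_right, one_mul, one_smul]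
      at hcreate
    rw [← hcreate]
    exact W.op_neg_one_mem_C1W
      (V.mem_pos_of_mem_wtSpace (by omega) (V.op_wt k 0 p v hv _ V.one_wt))
      (W.mem_posW_of_mem_wt (by simpa using hh) hw)
  | succ j ih =>
    push_cast at hp hpk hh
    have hL : W.op V.omega 0 w ∈ W.wt (h + 1) := by
      convert W.wt_op 2 _ V.omega_wt h 0 w hw using 2
      push_cast
      ring
    have hmem : W.op v (p + 1) (W.op V.omega 0 w) ∈ W.C1W :=
      ih (by omega) (by omega) (by rw [Complex.add_re, Complex.one_re]; linarith) hL
    have hderiv := sub_mem (W.op_omega_zero_mem_C1W (W.op v (p + 1) w)) hmem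
    rw [← W.op_op_omega_zero, W.op_op_omega_zero_of_neg v (by omega), add_sub_cancel_right]
      at hderiv
    exact (Submodule.smul_mem_iff _ (neg_ne_zero.2 (mod_cast (by omega)))).1 hderiv

lemma eventually_op_mem_C1W {B : ℝ} (hB : ∀ h : ℂ, W.wt h ≠ ⊥ → B ≤ h.re) (v : V.carrier) :
    ∀ᶠ p in atBot, ∀ w, W.op v p w ∈ W.C1W := by
  obtain ⟨j, hj⟩ := exists_nat_gt (-B)
  induction v using VOA.homogeneous_induction with
  | homogeneous k v hv =>
    filter_upwards [eventually_le_atBot (-1 - j : ℤ), eventually_le_atBot (k - j - 2)]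
      with p hp hpk w
    induction w using homogeneous_induction with
    | homogeneous h w hw =>
      by_cases hbot : W.wt h = ⊥
      · rw [hbot, Submodule.mem_bot] at hw
        rw [hw, WeakModule.op_zero]
        exact zero_mem _
      · exact W.op_mem_C1W hv j hp (by omega) (by linarith [hB h hbot]) hw
    | zero =>
      rw [WeakModule.op_zero]
      exact zero_mem _
    | add w₁ w₂ ih₁ ih₂ =>
      rw [(W.op_linear_right v p).map_add]
      exact add_mem ih₁ ih₂
  | zero => exact .of_forall fun p w => by simp
  | add v₁ v₂ ih₁ ih₂ =>
    filter_upwards [ih₁, ih₂] with p h₁ h₂ w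
    rw [(W.op_linear_left p w).map_add]
    exact add_mem (h₁ w) (h₂ w)

end GenModule

theorem quotients_finite_dimensional_of_classA_general {V : VOA} (W : GenModule V)
    (hfd : ∀ h, FiniteDimensional ℂ (W.wt h)) (hss : ⨆ h, W.dualModule.eig h = ⊤) :
    (∀ n : ℤ, 1 ≤ n → FiniteDimensional ℂ (W.carrier ⧸ W.Cn n)) ∧
    ((∃ B : ℝ, ∀ h : ℂ, W.wt h ≠ ⊥ → B ≤ h.re) → FiniteDimensional ℂ (W.carrier ⧸ W.C1W)) := by
  refine ⟨fun n hn => ?_, fun ⟨B, hB⟩ => ?_⟩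
  · refine (W.isGraded_Cn n).finiteDimensional_quotient (fun v => ?_) hfd hss
    filter_upwards [eventually_le_atBot (-n)] with p hp w
    exact W.op_mem_Cn hn hp v w
  · exact W.isGraded_C1W.finiteDimensional_quotient (W.eventually_op_mem_C1W hB) hfd hss

end

/-- Let `V` be of class 𝒜 (`L(0)` acts semisimply on every weak
`V`-module) and `W` an ordinary `V`-module.  Then `W/Cₙ(W)` is finite-dimensional for
every `n ≥ 2`, and `W/C₁(W)` is finite-dimensional provided the real parts of the
weights of `W` are bounded from below. -/
theorem quotients_finite_dimensional_of_classA (V : VOA) (hV : V.classA)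
    (W : OrdModule V) :
    (∀ n : ℤ, 2 ≤ n →
      FiniteDimensional ℂ (W.carrier ⧸ W.toGenModule.toWeakModule.Cn n)) ∧
    ((∃ B : ℝ, ∀ h : ℂ, W.wt h ≠ ⊥ → B ≤ h.re) →
      FiniteDimensional ℂ (W.carrier ⧸ W.toGenModule.C1W)) := by
  have h := quotients_finite_dimensional_of_classA_general W.toGenModule W.wt_fd (hV _)
  exact ⟨fun n hn => h.1 n (by omega), h.2⟩
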